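/- Let P be any family of subsets of 𝟚^ℤ. Suppose there exists a non-surjective cellular automaton F₀ on 𝟚 with Ω_{F₀} ∈ P, and there exists a non-surjective cellular automaton F₁ on 𝟚 with Ω_{F₁} ∉ P. Let π : 𝟚^{ℤ×ℤ} → 𝟚^ℤ be the projection π(x) = (j ↦ x(0, j)). Then the problem, given a code of a two-dimensional subshift of finite type Σ ⊆ 𝟚^{ℤ×ℤ} (a finite set of forbidden finite patterns), of deciding whether π(Σ) ∈ P, is undecidable: the predicate 'π(Σ) ∈ P' on codes of two-dimensional subshifts of finite type is not a computable predicate. -/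

import Mathlib

/-- The configuration space of a one-dimensional cellular automaton over alphabet `B`. -/
abbrev Config (B : Type*) := ℤ → B

/-- The global map induced by the local rule `f` of radius `r`. -/
def caMap {B : Type*} (r : ℕ) (f : (Fin (2 * r + 1) → B) → B) : Config B → Config B :=
  fun x i => f fun j => x (i - (r : ℤ) + ((j : ℕ) : ℤ))

/-- The limit set `Ω_F = ⋂_{j ∈ ℕ} F^j(B^ℤ)`. -/
def limitSet {B : Type*} (F : Config B → Config B) : Set (Config B) :=
  ⋂ j : ℕ, Set.range F^[j]

/-- `F` is a cellular automaton: it is induced by some local rule of some radius. -/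
def IsCA {B : Type*} (F : Config B → Config B) : Prop :=
  ∃ (r : ℕ) (f : (Fin (2 * r + 1) → B) → B), F = caMap r f

/-- A code `(m, L)` of a two-dimensional subshift of finite type on `𝟚 = Bool`:
a size `m` and a finite set `L` of forbidden `m × m` patterns. -/
abbrev SFTCode := Σ m : ℕ, Finset (Fin m → Fin m → Bool)

/-- The two-dimensional subshift of finite type coded by `c = (m, L)`: the set of
configurations `x : 𝟚^{ℤ×ℤ}` such that no translate of `x` restricted to the square
`[0,m) × [0,m)` equals a pattern of `L`. -/
def sftOfCode (c : SFTCode) : Set (ℤ × ℤ → Bool) :=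
  {x | ∀ a b : ℤ, (fun (i j : Fin c.1) =>
    x (a + ((i : ℕ) : ℤ), b + ((j : ℕ) : ℤ))) ∉ c.2}

/-- The projection `π : 𝟚^{ℤ×ℤ} → 𝟚^ℤ`, `π(x) = (j ↦ x(0,j))`. -/
def proj (x : ℤ × ℤ → Bool) : Config Bool := fun j => x (0, j)

namespace Rice

/-- Half of a skeleton cell (row half or column half). -/
structure Half where
  h : ZMod 8
  l : Bool
  z : Bool
  m : Bool
  e : Bool
  b1 : Bool
  b2 : Bool

abbrev Sk := Half × Half

def cE (p : Sk) : Prop := p.1.l = true ∧ p.2.l = true ∧ (p.1.h = 2 ∨ p.1.h = 6) ∧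
  (p.2.h = 2 ∨ p.2.h = 6) ∧ p.1.e = p.2.e ∧ (p.1.h = 2 ↔ p.2.m = true) ∧ (p.2.h = 2 ↔ p.1.m = true)
def cLA (p : Sk) : Prop := p.1.l = true ∧ p.2.l = true ∧
  (p.1.h = 1 ∨ p.1.h = 3 ∨ p.1.h = 5 ∨ p.1.h = 7) ∧ p.2.h = 4 ∧ p.1.e = !p.2.e ∧
  (p.1.h = 1 ∨ p.1.h = 5 ↔ p.2.m = true)
def cLB (p : Sk) : Prop := p.1.l = false ∧ p.2.l = true ∧ p.2.h = 0
def cZ (p : Sk) : Prop := (p.1.z = true → p.1.e = false ∧ p.1.l = true)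

def cellOk (p : Sk) : Prop :=
  (cE p ∨ cLA p ∨ cLB p ∨ cLA p.swap ∨ cLB p.swap) ∧ cZ p ∧ cZ p.swap ∧
  (p.1.z = true → p.2.z = true → cE p)

/-- Horizontal border of the squares. -/
def hb (p : Sk) : Prop := p.1.e = false ∧ (p.1.h = 2 ∨ p.1.h = 3 ∨ p.1.h = 4 ∨ p.1.h = 5)
def vb (p : Sk) : Prop := p.2.e = false ∧ (p.2.h = 2 ∨ p.2.h = 3 ∨ p.2.h = 4 ∨ p.2.h = 5)

instance : DecidablePred hb := fun p => by unfold hb; infer_instance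
instance : DecidablePred vb := fun p => by unfold vb; infer_instance

def hstep (p q : Sk) : Prop := q.1.z = p.1.z ∧ q.1.m = p.1.m ∧ q.1.e = p.1.e ∧ q.2.z = (!p.2.z) ∧
  q.1.h = p.1.h + (if p.1.z = true then 2 else if q.1.l = true then 1 else 0)

def hbits (p q : Sk) : Prop :=
  q.1.b1 = (if vb q then q.2.m else p.1.b1) ∧ p.1.b2 = (if vb q then !q.2.m else q.1.b2)

def HRs (p q : Sk) : Prop := hstep p q ∧ hbits p q

structure SkTiling (c : ℤ → ℤ → Sk) : Prop where
  ok : ∀ i j, cellOk (c i j)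
  H : ∀ i j, hstep (c i j) (c (i+1) j)
  V : ∀ i j, hstep (c i j).swap (c i (j+1)).swap

theorem cE_swap {p : Sk} : cE p.swap ↔ cE p := by
  unfold cE; simp only [Prod.fst_swap, Prod.snd_swap]; constructor <;> rintro ⟨a,b,c,d,e,f,g⟩ <;>
  exact ⟨b,a,d,c,e.symm,g,f⟩

theorem cellOk_swap {p : Sk} (h : cellOk p) : cellOk p.swap := by
  obtain ⟨h1, h2, h3, h4⟩ := h
  refine ⟨?_, h3, by simpa using h2, fun a b => cE_swap.2 (h4 b a)⟩
  rw [cE_swap, Prod.swap_swap]; tauto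

def tr (c : ℤ → ℤ → Sk) : ℤ → ℤ → Sk := fun i j => (c j i).swap
def sh (ox oy : ℤ) (c : ℤ → ℤ → Sk) : ℤ → ℤ → Sk := fun i j => c (i + ox) (j + oy)

theorem SkTiling.tr {c} (h : SkTiling c) : SkTiling (tr c) :=
  ⟨fun i j => cellOk_swap (h.ok j i), fun i j => h.V j i, fun i j => by simpa [Rice.tr] using h.H j i⟩

theorem SkTiling.sh {c} (h : SkTiling c) (ox oy : ℤ) : SkTiling (sh ox oy c) :=
  ⟨fun i j => h.ok _ _, fun i j => by simpa [Rice.sh, add_right_comm] using h.H (i+ox) (j+oy),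
   fun i j => by simpa [Rice.sh, add_right_comm] using h.V (i+ox) (j+oy)⟩

/-- h,l,e fields of row half of level `s` at abscissa `x`. -/
def FormA (s : ℕ) (x : ℤ) (H : Half) : Prop :=
  H.h = ((2 * x / 2^s : ℤ) : ZMod 8) ∧ (H.l = true ↔ (2:ℤ)^s ∣ 2 * x) ∧ (H.e = true ↔ s % 2 = 1)

/-- all rows of level `< t` are as they should be -/
def RowsOK (t : ℕ) (c : ℤ → ℤ → Sk) : Prop :=
  (∀ i j, (c i j).1.z = true ↔ j % 2 = 1) ∧
  ∀ s < t, ∀ q i : ℤ, FormA s i (c i (2^s * (2*q+1))).1 ∧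
    ((c i (2^s * (2*q+1))).1.m = true ↔ (2*q+1) % 4 = 1)

def QQ (t : ℕ) (c : ℤ → ℤ → Sk) : Prop := RowsOK t c ∧ RowsOK t (tr c)

theorem row_const {c} (h : SkTiling c) (i i' j : ℤ) : (c i j).1.m = (c i' j).1.m ∧
    (c i j).1.z = (c i' j).1.z ∧ (c i j).1.e = (c i' j).1.e := by
  have key : ∀ i, (c i j).1.m = (c 0 j).1.m ∧
    (c i j).1.z = (c 0 j).1.z ∧ (c i j).1.e = (c 0 j).1.e := by
    intro i
    induction i using Int.induction_on with
    | zero => simp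
    | succ n ih =>
      obtain ⟨a, b, d, -⟩ := h.H n j
      rw [a, b, d]; exact ih
    | pred n ih =>
      obtain ⟨a, b, d, -⟩ := h.H (-n-1) j
      rw [sub_add_cancel] at a b d
      rw [← a, ← b, ← d]; exact ih
  obtain ⟨a,b,d⟩ := key i
  obtain ⟨a',b',d'⟩ := key i'
  rw [a,b,d,a',b',d']; simp

/-- The conclusion of the row step: up to shift, level `t` rows have the right form. -/
def StepR (t : ℕ) (c : ℤ → ℤ → Sk) : Prop :=
  ∃ ox : ℤ, (ox = 0 ∨ ox = 2^(t+1)) ∧ ∀ q i : ℤ, FormA t i (c (i + ox) (2^t * (2*q+1))).1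

theorem stepR_zero {c} (h : SkTiling c) (hQ : QQ 0 c) : StepR 0 c := by
  have hz : ∀ i j, (c i j).1.z = true ↔ j % 2 = 1 := hQ.1.1
  have hz' : ∀ i j, (c i j).2.z = true ↔ i % 2 = 1 := fun i j => by simpa [tr] using hQ.2.1 j i
  have key : ∀ q i : ℤ, (c i (2*q+1)).1.h = (c 1 (2*q+1)).1.h + ((2*(i-1) : ℤ) : ZMod 8) := by
    intro q i
    have hs : ∀ i, (c (i+1) (2*q+1)).1.h = (c i (2*q+1)).1.h + 2 := by
      intro i
      obtain ⟨-,-,-,-,e⟩ := h.H i (2*q+1)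
      rw [e, if_pos ((hz _ _).2 (by omega))]
    have := fun n : ℤ => (show (c (n+1) (2*q+1)).1.h = (c 1 (2*q+1)).1.h + ((2*n : ℤ) : ZMod 8) by
      induction n using Int.induction_on with
      | zero => simp
      | succ n ih => rw [hs, ih]; push_cast; ring
      | pred n ih =>
        have := hs (-n-1+1-1+1)
        rw [show (-(n:ℤ)-1+1-1+1+1) = -n+1 by ring, ih] at this
        have h2 := eq_sub_of_add_eq this.symm
        rw [show (-(n:ℤ)-1+1-1+1) = -n-1+1 by ring] at h2
        rw [h2]; push_cast; ring)
    have := this (i-1)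
    rwa [sub_add_cancel] at this
  have hE : ∀ q, cE (c 1 (2*q+1)) := fun q =>
    (h.ok 1 (2*q+1)).2.2.2 ((hz _ _).2 (by omega)) ((hz' _ _).2 (by omega))
  have hm : ∀ q, (c 1 (2*q+1)).2.m = (c 1 0).2.m := fun q => by
    have := (row_const h.tr (2*q+1) 0 1).1
    simpa [tr] using this
  have hZ : ∀ q i, (c i (2*q+1)).1.e = false ∧ (c i (2*q+1)).1.l = true := fun q i =>
    (h.ok i (2*q+1)).2.1 ((hz _ _).2 (by omega))
  by_cases hc : (c 1 0).2.m = true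
  · refine ⟨0, Or.inl rfl, fun q i => ?_⟩
    simp only [pow_zero, one_mul, add_zero]
    have h2 : (c 1 (2*q+1)).1.h = 2 := (hE q).2.2.2.2.2.1.2 (by rw [hm, hc])
    refine ⟨?_, by simp [hZ], by simp [hZ]⟩
    rw [key, h2]; simp; ring
  · refine ⟨2^(0+1), Or.inr rfl, fun q i => ?_⟩
    simp only [pow_zero, one_mul]
    have h2 : (c 1 (2*q+1)).1.h = 6 := by
      have := (hE q).2.2.2.2.2.1
      rcases (hE q).2.2.1 with h3 | h3
      · rw [hm] at this; exact absurd (this.1 h3) hc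
      · exact h3
    refine ⟨?_, by simp [hZ], by simp [hZ]⟩
    rw [key, h2]; push_cast; ring_nf
    rw [show (8 : ZMod 8) = 0 from rfl]; simp

end Rice

namespace Rice

theorem exists_level (u : ℕ) : ∀ x : ℤ, ¬ (2:ℤ)^u ∣ x → ∃ s < u, ∃ k : ℤ, x = 2^s * (2*k+1) := by
  induction u with
  | zero => intro x hx; simp at hx
  | succ u ih =>
    intro x hx
    by_cases h : (2:ℤ)^u ∣ x
    · obtain ⟨k, rfl⟩ := h
      refine ⟨u, by omega, k/2, ?_⟩
      have : k % 2 = 1 := by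
        by_contra hk
        apply hx
        rw [pow_succ]
        exact mul_dvd_mul_left _ (by omega)
      congr 1; omega
    · obtain ⟨s, hs, k, e⟩ := ih x h
      exact ⟨s, by omega, k, e⟩

theorem div_pow_shift (s t : ℕ) (hs : s < t) (x : ℤ) :
    ((2 * (x + 2^(t+1)) / 2^s : ℤ) : ZMod 8) = ((2 * x / 2^s : ℤ) : ZMod 8) := by
  obtain ⟨d, rfl⟩ := Nat.exists_eq_add_of_lt hs
  have : (2 * (x + 2^(s+d+1+1)) : ℤ) = 2 * x + 2^s * (8 * 2^d) := by ring
  rw [this, Int.add_mul_ediv_left _ _ (by positivity)]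
  push_cast
  rw [show (8 : ZMod 8) = 0 from rfl]; simp

theorem div_pow_shift' (t : ℕ) (x : ℤ) :
    ((2 * (x + 2^(t+1)) / 2^t : ℤ) : ZMod 8) = ((2 * x / 2^t : ℤ) : ZMod 8) + 4 := by
  have : (2 * (x + 2^(t+1)) : ℤ) = 2 * x + 2^t * 4 := by ring
  rw [this, Int.add_mul_ediv_left _ _ (by positivity)]
  push_cast; ring

theorem stepR_succ {c} (u : ℕ) (h : SkTiling c) (hQ : QQ (u+1) c) : StepR (u+1) c := by
  have hcol : ∀ s < u+1, ∀ q j : ℤ, FormA s j (c (2^s * (2*q+1)) j).2 ∧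
    ((c (2^s * (2*q+1)) j).2.m = true ↔ (2*q+1) % 4 = 1) := fun s hs q j => hQ.2.2 s hs q j
  have hz : ∀ i j, (c i j).1.z = true ↔ j % 2 = 1 := hQ.1.1
  -- odd columns
  have hA : ∀ q k : ℤ, cLA (c (2^u * (2*k+1)) (2^(u+1) * (2*q+1))) ∧
      ((c (2^u * (2*k+1)) (2^(u+1) * (2*q+1))).2.e = true ↔ u % 2 = 1) ∧
      ((c (2^u * (2*k+1)) (2^(u+1) * (2*q+1))).2.m = true ↔ (2*k+1) % 4 = 1) := by
    intro q k
    obtain ⟨⟨f1, f2, f3⟩, f4⟩ := hcol u (by omega) k (2^(u+1) * (2*q+1))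
    refine ⟨?_, f3, f4⟩
    have e4 : (c (2^u * (2*k+1)) (2^(u+1) * (2*q+1))).2.h = 4 := by
      rw [f1, show (2 * (2^(u+1) * (2*q+1)) : ℤ) = 2^u * (4 + 8 * q) by ring,
        Int.mul_ediv_cancel_left _ (by positivity)]
      push_cast
      rw [show (8 : ZMod 8) = 0 from rfl]; simp
    have el : (c (2^u * (2*k+1)) (2^(u+1) * (2*q+1))).2.l = true :=
      f2.2 ⟨4 * (2*q+1), by ring⟩
    rcases (h.ok (2^u * (2*k+1)) (2^(u+1) * (2*q+1))).1 with H | H | H | H | H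
    · exact absurd H.2.2.2.1 (by rw [e4]; decide)
    · exact H
    · exact absurd H.2.2 (by rw [e4]; decide)
    · exact absurd H.2.2.1 (by rw [Prod.fst_swap, e4]; decide)
    · exact absurd H.1 (by rw [Prod.fst_swap, el]; decide)
  have hB : ∀ s < u, ∀ q k : ℤ, (c (2^s * (2*k+1)) (2^(u+1) * (2*q+1))).1.l = false := by
    intro s hs q k
    obtain ⟨⟨f1, f2, f3⟩, f4⟩ := hcol s (by omega) k (2^(u+1) * (2*q+1))
    obtain ⟨d, rfl⟩ := Nat.exists_eq_add_of_lt hs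
    have e4 : (c (2^s * (2*k+1)) (2^(s+d+1+1) * (2*q+1))).2.h = 0 := by
      rw [f1, show (2 * (2^(s+d+1+1) * (2*q+1)) : ℤ) = 2^s * (8 * (2^d * (2*q+1))) by ring,
        Int.mul_ediv_cancel_left _ (by positivity)]
      push_cast
      rw [show (8 : ZMod 8) = 0 from rfl]; simp
    have el : (c (2^s * (2*k+1)) (2^(s+d+1+1) * (2*q+1))).2.l = true :=
      f2.2 ⟨(8 * (2^d * (2*q+1))), by ring⟩
    rcases (h.ok (2^s * (2*k+1)) (2^(s+d+1+1) * (2*q+1))).1 with H | H | H | H | H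
    · exact absurd H.2.2.2.1 (by rw [e4]; decide)
    · exact absurd H.2.2.2.1 (by rw [e4]; decide)
    · exact H.1
    · exact absurd H.2.2.1 (by rw [Prod.fst_swap, e4]; decide)
    · exact absurd H.1 (by rw [Prod.fst_swap, el]; decide)
  -- steps
  have hs : ∀ q i : ℤ, (c (i+1) (2^(u+1) * (2*q+1))).1.h = (c i (2^(u+1) * (2*q+1))).1.h +
      (if (c (i+1) (2^(u+1) * (2*q+1))).1.l = true then 1 else 0) := by
    intro q i
    obtain ⟨-,-,-,-,e⟩ := h.H i (2^(u+1) * (2*q+1))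
    rw [e, if_neg]
    rw [hz, pow_succ, show (2^u * 2 * (2*q+1) : ℤ) = 2 * (2^u * (2*q+1)) by ring]
    omega
  have hnl : ∀ q n : ℤ, ∀ d : ℕ, 0 < d → d < 2^u →
      (c (2^u * n + d) (2^(u+1) * (2*q+1))).1.l = false := by
    intro q n d hd hd'
    obtain ⟨s, hs, k, e⟩ := exists_level u (2^u * n + d) (by
      intro hdv
      have h1 : (2:ℤ)^u ∣ d := (Int.dvd_add_right (Dvd.intro _ rfl)).1 hdv
      have := Int.le_of_dvd (by exact_mod_cast hd) h1
      have h3 : (d:ℤ) < 2^u := by exact_mod_cast hd'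
      omega)
    rw [e]; exact hB s hs q k
  have hconst : ∀ q n : ℤ, ∀ d : ℕ, d < 2^u →
      (c (2^u * n + d) (2^(u+1) * (2*q+1))).1.h = (c (2^u * n) (2^(u+1) * (2*q+1))).1.h := by
    intro q n d
    induction d with
    | zero => intro _; simp
    | succ d ih =>
      intro hd
      have := hs q (2^u * n + d)
      rw [show (2^u * n + d + 1 : ℤ) = 2^u * n + (d+1 : ℕ) by push_cast; ring,
        hnl q n (d+1) (by omega) hd] at this
      rw [this, ih (by omega)]; simp
  have hnext : ∀ q n : ℤ, (c (2^u * (n+1)) (2^(u+1) * (2*q+1))).1.h =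
     (c (2^u * n) (2^(u+1) * (2*q+1))).1.h +
      (if (c (2^u * (n+1)) (2^(u+1) * (2*q+1))).1.l = true then 1 else 0) := by
    intro q n
    have h1 := hconst q n (2^u - 1) (by have := Nat.two_pow_pos u; omega)
    have h2 := hs q (2^u * n + (2^u - 1 : ℕ))
    have h3 : (2^u * n + (2^u - 1 : ℕ) + 1 : ℤ) = 2^u * (n+1) := by
      rw [Nat.cast_sub (Nat.one_le_two_pow)]; push_cast; ring
    rw [h3, h1] at h2
    exact h2
  have hland : ∀ q n : ℤ, (c (2^u * n) (2^(u+1) * (2*q+1))).1.l = true := by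
    intro q n
    rcases Int.even_or_odd' n with ⟨k, rfl | rfl⟩
    · by_contra hl
      have h1 := hnext q (2*(k-1)+1)
      have h2 := hnext q (2*k)
      rw [show (2*(k-1)+1+1 : ℤ) = 2*k by ring, if_neg hl] at h1
      rw [if_pos (hA q k).1.1, h1] at h2
      have h3 := (hA q (k-1)).1.2.2.1
      have h4 := (hA q k).1.2.2.1
      rw [h2] at h4
      generalize (c (2^u * (2*(k-1)+1)) (2^(u+1) * (2*q+1))).1.h = y at h3 h4
      revert y; decide
    · exact (hA q k).1.1
  have hX : ∀ q n : ℤ, (c (2^u * n) (2^(u+1) * (2*q+1))).1.h =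
      (c 0 (2^(u+1) * (2*q+1))).1.h + ((n : ℤ) : ZMod 8) := by
    intro q n
    induction n using Int.induction_on with
    | zero => simp
    | succ n ih => rw [hnext, if_pos (hland _ _), ih]; push_cast; ring
    | pred n ih =>
      have := hnext q (-n-1)
      rw [sub_add_cancel, if_pos (hland _ _), ih] at this
      have h2 := eq_sub_of_add_eq this.symm
      rw [h2]; push_cast; ring
  have hall : ∀ q i : ℤ, (c i (2^(u+1) * (2*q+1))).1.h =
      (c 0 (2^(u+1) * (2*q+1))).1.h + ((2 * i / 2^(u+1) : ℤ) : ZMod 8) ∧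
      ((c i (2^(u+1) * (2*q+1))).1.l = true ↔ (2:ℤ)^(u+1) ∣ 2 * i) := by
    intro q i
    have hp : (0:ℤ) < 2^u := by positivity
    obtain ⟨d, hd⟩ := Int.eq_ofNat_of_zero_le (Int.emod_nonneg i hp.ne')
    have hd2 := Int.emod_lt_of_pos i hp
    have hi : i = 2^u * (i / 2^u) + d := by rw [← hd]; exact (Int.mul_ediv_add_emod _ _).symm
    have hdn : d < 2^u := by rw [hd] at hd2; exact_mod_cast hd2
    have e1 : (2 * i / 2^(u+1) : ℤ) = i / 2^u := by
      rw [pow_succ', Int.mul_ediv_mul_of_pos _ _ (by norm_num)]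
    have e2 : ((2:ℤ)^(u+1) ∣ 2 * i) ↔ d = 0 := by
      rw [pow_succ', mul_dvd_mul_iff_left (by norm_num), Int.dvd_iff_emod_eq_zero, hd]
      exact_mod_cast Iff.rfl
    rw [e1, e2]
    constructor
    · rw [← hX q, ← hconst q _ d hdn, ← hi]
    · rcases Nat.eq_zero_or_pos d with h0 | h0
      · simp only [h0, iff_true]
        rw [hi, h0]; simpa using hland q (i / 2^u)
      · have := hnl q (i/2^u) d h0 hdn
        rw [← hi] at this
        simp [this]; omega
  have he : ∀ q i : ℤ, (c i (2^(u+1) * (2*q+1))).1.e = true ↔ (u+1) % 2 = 1 := by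
    intro q i
    rw [(row_const h i (2^u * (2*0+1)) _).2.2, (hA q 0).1.2.2.2.2.1]
    have := (hA q 0).2.1
    simp only [Bool.not_eq_true', Bool.eq_false_iff, ne_eq, this]
    omega
  have hX0 : ∀ q : ℤ, (c 0 (2^(u+1) * (2*q+1))).1.h = 0 ∨ (c 0 (2^(u+1) * (2*q+1))).1.h = 4 := by
    intro q
    have h1 := (hA q 0).1.2.2.2.2.2.2 ((hA q 0).2.2.2 (by norm_num))
    rw [hX] at h1
    generalize (c 0 (2^(u+1) * (2*q+1))).1.h = y at h1
    revert y; decide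
  have hm : ∀ q, ((c 0 (2^(u+1) * (2*q+1))).1.h = 0 ↔ (c (2^(u+1)) 0).2.m = true) := by
    intro q
    have hm1 : (c (2^(u+1)) (2^(u+1) * (2*q+1))).2.m = (c (2^(u+1)) 0).2.m := by
      have := (row_const h.tr (2^(u+1) * (2*q+1)) 0 (2^(u+1))).1
      simpa [tr] using this
    rw [← hm1]
    obtain ⟨a1, a2⟩ := hall q (2^(u+1))
    rw [Int.mul_ediv_cancel _ (by positivity)] at a1
    have al := a2.2 (Dvd.intro_left _ rfl)
    have h0 := hX0 q
    rcases (h.ok (2^(u+1)) (2^(u+1) * (2*q+1))).1 with H | H | H | H | H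
    · rw [← H.2.2.2.2.2.1, a1]
      generalize (c 0 (2^(u+1) * (2*q+1))).1.h = y at h0
      revert y; decide
    · exfalso
      have := H.2.2.1; rw [a1] at this
      generalize (c 0 (2^(u+1) * (2*q+1))).1.h = y at h0 this
      revert y; decide
    · exact absurd H.1 (by rw [al]; decide)
    · exfalso
      have := H.2.2.2.1; rw [Prod.snd_swap, a1] at this
      generalize (c 0 (2^(u+1) * (2*q+1))).1.h = y at h0 this
      revert y; decide
    · exfalso
      have := H.2.2; rw [Prod.snd_swap, a1] at this
      generalize (c 0 (2^(u+1) * (2*q+1))).1.h = y at h0 this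
      revert y; decide
  by_cases hc : (c (2^(u+1)) 0).2.m = true
  · refine ⟨0, Or.inl rfl, fun q i => ?_⟩
    simp only [add_zero]
    refine ⟨?_, (hall q i).2, he q i⟩
    rw [(hall q i).1, (hm q).2 hc, zero_add]
  · refine ⟨2^(u+1+1), Or.inr rfl, fun q i => ?_⟩
    have h4 : (c 0 (2^(u+1) * (2*q+1))).1.h = 4 := by
      rcases hX0 q with h1 | h1
      · exact absurd ((hm q).1 h1) hc
      · exact h1
    refine ⟨?_, ?_, he q _⟩
    · rw [(hall q _).1, h4, div_pow_shift' (u+1) i]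
      generalize ((2 * i / 2^(u+1) : ℤ) : ZMod 8) = y
      revert y; decide
    · rw [(hall q _).2, mul_add]
      exact (Int.dvd_add_left ⟨4, by ring⟩)

theorem stepR {c} (t : ℕ) (h : SkTiling c) (hQ : QQ t c) : StepR t c := by
  cases t with
  | zero => exact stepR_zero h hQ
  | succ u => exact stepR_succ u h hQ

end Rice

namespace Rice

theorem RowsOK_sh {c} {t : ℕ} {ox oy : ℤ} (h : RowsOK t c) (hx : ox = 0 ∨ ox = 2^(t+1))
    (hy : oy = 0 ∨ oy = 2^(t+1)) : RowsOK t (sh ox oy c) := by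
  refine ⟨fun i j => ?_, fun s hs q i => ?_⟩
  · unfold sh; rw [h.1]
    rcases hy with rfl | rfl
    · simp
    · rw [pow_succ]; omega
  · obtain ⟨d, rfl⟩ := Nat.exists_eq_add_of_lt hs
    have hy' : ∃ r : ℤ, (2^s * (2*q+1) + oy) = 2^s * (2*(q + 2 * r)+1) := by
      rcases hy with rfl | rfl
      · exact ⟨0, by ring⟩
      · exact ⟨2^d, by ring⟩
    obtain ⟨r, hr⟩ := hy'
    unfold sh
    rw [hr]
    obtain ⟨⟨f1, f2, f3⟩, f4⟩ := h.2 s hs (q + 2*r) (i + ox)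
    refine ⟨⟨?_, ?_, f3⟩, ?_⟩
    · rw [f1]
      rcases hx with rfl | rfl
      · simp
      · exact div_pow_shift s _ hs i
    · rw [f2]
      rcases hx with rfl | rfl
      · simp
      · rw [mul_add]; exact (Int.dvd_add_left ⟨8 * 2^d, by ring⟩)
    · rw [f4]; omega

theorem tr_sh (ox oy c) : tr (sh ox oy c) = sh oy ox (tr c) := rfl
theorem tr_tr (c) : tr (tr c) = c := by funext i j; simp [tr]

theorem rows_level_m {c} (t : ℕ) (h : SkTiling c) (hr : ∀ q i : ℤ, FormA t i (c i (2^t * (2*q+1))).1)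
    (hc : ∀ q i : ℤ, FormA t i (tr c i (2^t * (2*q+1))).1) (q i : ℤ) :
    ((c i (2^t * (2*q+1))).1.m = true ↔ (2*q+1) % 4 = 1) := by
  rw [(row_const h i (2^t * (2*0+1)) _).1]
  have h1 := hr q (2^t * (2*0+1))
  have h2 : FormA t (2^t * (2*q+1)) (c (2^t * (2*0+1)) (2^t * (2*q+1))).2 := hc 0 (2^t * (2*q+1))
  have hl := h1.2.1.2 ⟨2, by ring⟩
  have hh := h1.1
  rw [show (2 * (2^t * (2*0+1)) : ℤ) = 2^t * 2 by ring, Int.mul_ediv_cancel_left _ (by positivity)] at hh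
  have hw := h2.1
  rw [show (2 * (2^t * (2*q+1)) : ℤ) = 2^t * (2*(2*q+1)) by ring,
    Int.mul_ediv_cancel_left _ (by positivity)] at hw
  rcases (h.ok (2^t * (2*0+1)) (2^t * (2*q+1))).1 with H | H | H | H | H
  · rw [← H.2.2.2.2.2.2, hw]
    rw [show (2 : ZMod 8) = ((2 : ℤ) : ZMod 8) by rfl, ZMod.intCast_eq_intCast_iff]
    unfold Int.ModEq; push_cast; omega
  · exact absurd H.2.2.1 (by rw [hh]; decide)
  · exact absurd H.1 (by rw [hl]; decide)
  · exact absurd H.2.2.2.1 (by rw [Prod.snd_swap, hh]; decide)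
  · exact absurd H.2.2 (by rw [Prod.snd_swap, hh]; decide)

theorem QQ_step {c} (t : ℕ) (h : SkTiling c) (hQ : QQ t c) : ∃ ox oy, QQ (t+1) (sh ox oy c) := by
  obtain ⟨ox, hx, fx⟩ := stepR t h hQ
  obtain ⟨oy, hy, fy⟩ := stepR t h.tr ⟨hQ.2, by rw [tr_tr]; exact hQ.1⟩
  have a1 := RowsOK_sh hQ.1 hx hy
  have a2 := RowsOK_sh hQ.2 hy hx
  have key : ∀ (o o' : ℤ) (c : ℤ → ℤ → Sk) , (o = 0 ∨ o = 2^(t+1)) →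
      (∀ q i : ℤ, FormA t i (c (i + o') (2^t * (2*q+1))).1) →
      (∀ q i : ℤ, FormA t i (sh o' o c i (2^t * (2*q+1))).1) := by
    intro o o' c ho hf q i
    unfold sh
    rcases ho with rfl | rfl
    · rw [add_zero]; exact hf q i
    · rw [show (2^t * (2*q+1) + 2^(t+1) : ℤ) = 2^t * (2*(q+1)+1) by ring]; exact hf (q+1) i
  have b1 := key oy ox c hy fx
  have b2 := key ox oy (tr c) hx fy
  have hs := h.sh ox oy
  refine ⟨ox, oy, ⟨a1.1, fun s hst q i => ?_⟩, ⟨a2.1, fun s hst q i => ?_⟩⟩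
  · rcases Nat.lt_succ_iff_lt_or_eq.1 hst with h1 | rfl
    · exact a1.2 s h1 q i
    · exact ⟨b1 q i, rows_level_m s hs b1 b2 q i⟩
  · rcases Nat.lt_succ_iff_lt_or_eq.1 hst with h1 | rfl
    · exact a2.2 s h1 q i
    · exact ⟨b2 q i, rows_level_m s hs.tr b2 (by rw [tr_tr]; exact b1) q i⟩

theorem rows_zero {c} (h : SkTiling c) : ∃ oy : ℤ, ∀ ox, RowsOK 0 (sh ox oy c) := by
  have hz : ∀ j, (c 0 j).1.z = (if j % 2 = 0 then (c 0 0).1.z else ! (c 0 0).1.z) := by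
    have hs : ∀ j, (c 0 (j+1)).1.z = ! (c 0 j).1.z := fun j => (h.V 0 j).2.2.2.1
    intro j
    induction j using Int.induction_on with
    | zero => simp
    | succ n ih =>
      rw [hs, ih]
      rcases Int.emod_two_eq_zero_or_one n with e | e
      · rw [if_pos e, if_neg (by omega)]
      · rw [if_neg (by omega), if_pos (by omega)]; simp
    | pred n ih =>
      have := hs (-n-1)
      rw [sub_add_cancel, ih] at this
      rcases Int.emod_two_eq_zero_or_one n with e | e
      · rw [if_pos (by omega)] at this
        rw [if_neg (by omega), this]; simp
      · rw [if_neg (by omega)] at this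
        rw [if_pos (by omega)]; simpa using this.symm
  have hz2 : ∀ i j, (c i j).1.z = (c 0 j).1.z := fun i j => (row_const h i 0 j).2.1
  cases hb : (c 0 0).1.z
  · refine ⟨0, fun ox => ⟨fun i j => ?_, fun s hs => absurd hs (by omega)⟩⟩
    simp only [sh]
    rw [hz2, hz, hb]; simp
  · refine ⟨1, fun ox => ⟨fun i j => ?_, fun s hs => absurd hs (by omega)⟩⟩
    simp only [sh]
    rw [hz2, hz, hb]; simp; omega

theorem exists_QQ {c} (h : SkTiling c) (t : ℕ) : ∃ ox oy, QQ t (sh ox oy c) := by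
  induction t with
  | zero =>
    obtain ⟨oy, hy⟩ := rows_zero h
    obtain ⟨ox, hx⟩ := rows_zero h.tr
    exact ⟨ox, oy, hy ox, hx oy⟩
  | succ t ih =>
    obtain ⟨ox, oy, hq⟩ := ih
    obtain ⟨ox', oy', hq'⟩ := QQ_step t (h.sh ox oy) hq
    refine ⟨ox' + ox, oy' + oy, ?_⟩
    convert hq' using 1
    funext i j; simp [sh, add_assoc]

end Rice

namespace Rice

def InSpan (r i : ℕ) : Prop := (i / 4^r) % 4 = 1 ∨ (i / 4^r) % 4 = 2
def Tau (r i : ℕ) : Prop := InSpan r i ∧ ∀ r' < r, ¬ InSpan r' i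

instance (r i) : Decidable (InSpan r i) := by unfold InSpan; infer_instance
instance (r i) : Decidable (Tau r i) := by unfold Tau; infer_instance

def HB (i j : ℕ) : Prop := ∃ r q, j = 4^r * (2*q+1) ∧ InSpan r i

theorem bits_lemma (bd bu mu : ℕ → Bool) (B : ℕ → Prop) [DecidablePred B] (M r : ℕ)
    (h1 : ∀ j, j + 1 < M → bd (j+1) = if B (j+1) then mu (j+1) else bd j)
    (h2 : ∀ j, j + 1 < M → bu j = if B (j+1) then !mu (j+1) else bu (j+1))
    (h3 : ∀ j, 0 < j → j < M → B j → ∃ n, j = 4^r * n ∧ n % 4 ≠ 2)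
    (h4 : ∀ n, n % 2 = 1 → 4^r * n < M → B (4^r * n) ∧ (mu (4^r * n) = true ↔ n % 4 = 1))
    (j : ℕ) (hj : j + 4^(r+1) < M) : (bd j = true ∧ bu j = true) ↔ InSpan r j := by
  have hp : 0 < 4^r := by positivity
  have h3' : ∀ n d, 0 < d → d < 4^r → 4^r * n + d < M → ¬ B (4^r * n + d) := by
    intro n d hd hd' hM hB
    obtain ⟨n', e, -⟩ := h3 _ (by omega) hM hB
    have : 4^r ∣ d := (Nat.dvd_add_right (Dvd.intro _ rfl)).1 (e ▸ Dvd.intro _ rfl)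
    have := Nat.le_of_dvd hd this
    omega
  have h3'' : ∀ n, n % 4 = 2 → 4^r * n < M → ¬ B (4^r * n) := by
    intro n hn hM hB
    obtain ⟨n', e, h⟩ := h3 _ (by have : 0 < n := by omega
                                  positivity) hM hB
    have := Nat.eq_of_mul_eq_mul_left hp e
    omega
  have cd : ∀ n d, d < 4^r → 4^r * n + d < M → bd (4^r * n + d) = bd (4^r * n) := by
    intro n d
    induction d with
    | zero => simp
    | succ d ih =>
      intro hd hM
      rw [← add_assoc, h1 _ (by omega), if_neg (by rw [add_assoc]; exact h3' n (d+1) (by omega) hd hM),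
        ih (by omega) (by omega)]
  have cu : ∀ n d, d < 4^r → 4^r * n + d < M → bu (4^r * n + d) = bu (4^r * n) := by
    intro n d
    induction d with
    | zero => simp
    | succ d ih =>
      intro hd hM
      rw [← ih (by omega) (by omega), h2 (4^r * n + d) (by omega),
        if_neg (by rw [add_assoc]; exact h3' n (d+1) (by omega) hd hM), ← add_assoc]
  have nd : ∀ n, 4^r * (n+1) < M → bd (4^r * (n+1)) =
      if B (4^r * (n+1)) then mu (4^r * (n+1)) else bd (4^r * n) := by
    intro n hM
    have e : 4^r * (n+1) = 4^r * n + (4^r - 1) + 1 := by rw [mul_add]; omega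
    rw [e, h1 _ (by omega), cd n _ (by omega) (by omega)]
  have nu : ∀ n, 4^r * (n+1) < M → bu (4^r * n) =
      if B (4^r * (n+1)) then !mu (4^r * (n+1)) else bu (4^r * (n+1)) := by
    intro n hM
    have e : 4^r * (n+1) = 4^r * n + (4^r - 1) + 1 := by rw [mul_add]; omega
    rw [← cu n (4^r-1) (by omega) (by omega), e, h2 _ (by omega)]
  obtain ⟨n, d, hd, rfl⟩ : ∃ n d, d < 4^r ∧ j = 4^r * n + d :=
    ⟨j / 4^r, j % 4^r, Nat.mod_lt _ hp, (Nat.div_add_mod _ _).symm⟩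
  have hM : 4^r * n + 4 * 4^r < M := by rw [pow_succ] at hj; omega
  rw [cd n d hd (by omega), cu n d hd (by omega)]
  have hn : (4^r * n + d) / 4^r = n := by
    rw [Nat.mul_add_div hp, Nat.div_eq_of_lt hd, add_zero]
  unfold InSpan; rw [hn]
  have hn4 : n % 4 = 0 ∨ n % 4 = 1 ∨ n % 4 = 2 ∨ n % 4 = 3 := by omega
  rcases hn4 with h | h | h | h
  · have hM1 : 4^r * (n+1) < M := by rw [mul_add]; omega
    have := h4 (n+1) (by omega) hM1
    rw [nu n hM1, if_pos this.1, (this.2).2 (by omega)]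
    simp [h]
  · have hM1 : 4^r * (n+1) < M := by rw [mul_add]; omega
    have hM2 : 4^r * (n+2) < M := by rw [mul_add]; omega
    have a := h4 (n+2) (by omega) hM2
    have a' : mu (4^r * (n+1+1)) = false := by
      rw [Bool.eq_false_iff, ne_eq, a.2]; omega
    rw [nu n hM1, if_neg (h3'' (n+1) (by omega) hM1), nu (n+1) hM2, if_pos a.1, a']
    obtain ⟨k, rfl⟩ : ∃ k, n = k + 1 := ⟨n-1, by omega⟩
    have b := h4 (k+1) (by omega) (by omega)
    rw [nd k (by omega), if_pos b.1, b.2.2 h]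
    simp [h]
  · have hM1 : 4^r * (n+1) < M := by rw [mul_add]; omega
    have a := h4 (n+1) (by omega) hM1
    have a' : mu (4^r * (n+1)) = false := by
      rw [Bool.eq_false_iff, ne_eq, a.2]; omega
    rw [nu n hM1, if_pos a.1, a']
    obtain ⟨k, rfl⟩ : ∃ k, n = k + 2 := ⟨n-2, by omega⟩
    have l1 : 4^r * (k+1) < M := by rw [mul_add] at hM ⊢; omega
    have b := h4 (k+1) (by omega) l1
    rw [nd (k+1) (by show 4^r * (k+2) < M; omega), if_neg (h3'' (k+2) h (by omega)),
      nd k l1, if_pos b.1, b.2.2 (by omega)]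
    simp [h]
  · obtain ⟨k, rfl⟩ : ∃ k, n = k + 1 := ⟨n-1, by omega⟩
    have b := h4 (k+1) (by omega) (by omega)
    have b' : mu (4^r * (k+1)) = false := by
      rw [Bool.eq_false_iff, ne_eq, b.2]; omega
    rw [nd k (by omega), if_pos b.1, b']
    simp [h]

/-- natural-coordinates skeleton facts -/
def RowsN (M : ℕ) (c : ℕ → ℕ → Sk) : Prop :=
  ∀ i j s q : ℕ, 0 < i → i < M → j < M → j = 2^s * (2*q+1) →
    FormA s i (c i j).1 ∧ ((c i j).1.m = true ↔ (2*q+1) % 4 = 1)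

def trN (c : ℕ → ℕ → Sk) : ℕ → ℕ → Sk := fun i j => (c j i).swap

structure SkN (M : ℕ) (c : ℕ → ℕ → Sk) : Prop where
  rows : RowsN M c
  cols : RowsN M (trN c)
  hB : ∀ i j, i + 1 < M → 0 < j → j < M → hbits (c i j) (c (i+1) j)
  vB : ∀ i j, 0 < i → i < M → j + 1 < M → hbits (c i j).swap (c i (j+1)).swap

theorem SkN.tr {M c} (h : SkN M c) : SkN M (trN c) :=
  ⟨h.cols, h.rows, fun i j a b d => h.vB j i b d a, fun i j a b d => by
    simpa [trN] using h.hB j i d a b⟩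

theorem zmod8_cast (n k : ℕ) (hk : k < 8) : ((n : ℤ) : ZMod 8) = (k : ZMod 8) ↔ n % 8 = k := by
  rw [Int.cast_natCast, ZMod.natCast_eq_natCast_iff]
  unfold Nat.ModEq; omega

theorem pow_form_unique {s s' q q' : ℕ} (h : 2^s * (2*q+1) = 2^s' * (2*q'+1)) : s = s' ∧ q = q' := by
  have key : ∀ s s' q q' : ℕ, s < s' → 2^s * (2*q+1) = 2^s' * (2*q'+1) → False := by
    intro s s' q q' hlt h
    obtain ⟨d, rfl⟩ := Nat.exists_eq_add_of_lt hlt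
    rw [show s + d + 1 = s + (d+1) by ring, pow_add, mul_assoc] at h
    have := Nat.eq_of_mul_eq_mul_left (by positivity) h
    rw [pow_succ, show 2^d * 2 * (2*q'+1) = 2 * (2^d * (2*q'+1)) by ring] at this
    omega
  rcases lt_trichotomy s s' with h1 | rfl | h1
  · exact (key _ _ _ _ h1 h).elim
  · have := Nat.eq_of_mul_eq_mul_left (by positivity) h
    omega
  · exact (key _ _ _ _ h1 h.symm).elim

theorem exists_form (j : ℕ) (hj : 0 < j) : ∃ s q, j = 2^s * (2*q+1) := by
  obtain ⟨k, m, hm, e⟩ := Nat.exists_eq_two_pow_mul_odd hj.ne'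
  obtain ⟨q, rfl⟩ := hm
  exact ⟨k, q, e⟩

theorem FormA_hb {s i : ℕ} {H : Half} (h : FormA s i H) :
    (H.e = false ∧ (H.h = 2 ∨ H.h = 3 ∨ H.h = 4 ∨ H.h = 5)) ↔
    (s % 2 = 0 ∧ ((i / 2^s) % 4 = 1 ∨ (i / 2^s) % 4 = 2)) := by
  obtain ⟨h1, -, h3⟩ := h
  have e1 : H.e = false ↔ s % 2 = 0 := by
    rw [Bool.eq_false_iff, ne_eq, h3]; omega
  rw [e1, h1]
  have e2 : (2 * (i:ℤ) / 2^s) = ((2 * i / 2^s : ℕ) : ℤ) := by push_cast; rfl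
  rw [e2]
  have z2 := zmod8_cast (2*i/2^s) 2 (by norm_num)
  have z3 := zmod8_cast (2*i/2^s) 3 (by norm_num)
  have z4 := zmod8_cast (2*i/2^s) 4 (by norm_num)
  have z5 := zmod8_cast (2*i/2^s) 5 (by norm_num)
  push_cast at z2 z3 z4 z5 ⊢
  rw [z2, z3, z4, z5]
  have e3 : i / 2^s = (2 * i / 2^s) / 2 := by
    rw [Nat.div_div_eq_div_mul, mul_comm (2^s), Nat.mul_div_mul_left _ _ (by norm_num)]
  rw [e3]
  generalize 2 * i / 2^s = y
  omega

theorem SkN.hb_iff {M c} (h : SkN M c) {i j : ℕ} (hi : 0 < i) (hi' : i < M) (hj : 0 < j) (hj' : j < M) :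
    hb (c i j) ↔ HB i j := by
  obtain ⟨s, q, e⟩ := exists_form j hj
  have hf := h.rows i j s q hi hi' hj' e
  unfold hb; rw [FormA_hb hf.1]
  constructor
  · rintro ⟨hs, hd⟩
    obtain ⟨r, rfl⟩ : ∃ r, s = 2 * r := ⟨s/2, by omega⟩
    rw [pow_mul] at e hd
    exact ⟨r, q, e, hd⟩
  · rintro ⟨r, q', e', hd⟩
    rw [show (4:ℕ) = 2^2 from rfl, ← pow_mul] at e'
    obtain ⟨rfl, rfl⟩ := pow_form_unique (e.symm.trans e')
    refine ⟨by omega, ?_⟩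
    unfold InSpan at hd
    rwa [show 4^r = 2^(2*r) by rw [pow_mul]; rfl] at hd

theorem SkN.vb_iff {M c} (h : SkN M c) {i j : ℕ} (hi : 0 < i) (hi' : i < M) (hj : 0 < j) (hj' : j < M) :
    vb (c i j) ↔ HB j i := h.tr.hb_iff hj hj' hi hi'

def cf (p : Sk) : Prop := p.2.b1 = true ∧ p.2.b2 = true
def rf (p : Sk) : Prop := p.1.b1 = true ∧ p.1.b2 = true

theorem not_pow_mul_two {r r' n q : ℕ} (hr : r ≤ r') (hn : n % 4 = 2) (h : 4^r * n = 4^r' * (2*q+1)) :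
    False := by
  obtain ⟨d, rfl⟩ := Nat.exists_eq_add_of_le hr
  rw [pow_add, mul_assoc] at h
  have := Nat.eq_of_mul_eq_mul_left (by positivity) h
  cases d with
  | zero => omega
  | succ d =>
    rw [pow_succ, show 4^d * 4 * (2*q+1) = 4 * (4^d * (2*q+1)) by ring] at this
    omega

theorem SkN.cf_iff {M c} (h : SkN M c) {i j r : ℕ} (hi : 0 < i) (hi' : i < M) (ht : Tau r i)
    (hj : j + 4^(r+1) < M) : cf (c i j) ↔ InSpan r j := by
  have hp : 0 < 4^r := by positivity
  refine bits_lemma (fun j => (c i j).2.b1) (fun j => (c i j).2.b2) (fun j => (c i j).1.m)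
    (fun j => hb (c i j)) M r ?_ ?_ ?_ ?_ j hj
  · intro j hj
    exact (h.vB i j hi hi' hj).1
  · intro j hj
    exact (h.vB i j hi hi' hj).2
  · intro j hj0 hj hB
    rw [h.hb_iff hi hi' hj0 hj] at hB
    obtain ⟨r', q, e, hs⟩ := hB
    have hr : r ≤ r' := by
      by_contra hlt
      exact ht.2 r' (by omega) hs
    obtain ⟨d, rfl⟩ := Nat.exists_eq_add_of_le hr
    refine ⟨4^d * (2*q+1), by rw [e, pow_add, mul_assoc], fun h4 => ?_⟩
    exact not_pow_mul_two (r := r) (r' := r+d) (q := q) hr h4 (by rw [pow_add, mul_assoc])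
  · intro n hn hM
    have hn0 : 0 < n := by omega
    obtain ⟨q, rfl⟩ : ∃ q, n = 2*q+1 := ⟨n/2, by omega⟩
    refine ⟨(h.hb_iff hi hi' (by positivity) hM).2 ⟨r, q, rfl, ht.1⟩, ?_⟩
    exact (h.rows i _ (2*r) q hi hi' hM (by rw [pow_mul]; rfl)).2

theorem SkN.rf_iff {M c} (h : SkN M c) {i j r : ℕ} (hj : 0 < j) (hj' : j < M) (ht : Tau r j)
    (hi : i + 4^(r+1) < M) : rf (c i j) ↔ InSpan r i :=
  h.tr.cf_iff hj hj' ht hi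

def node (p : Sk) : Prop := cf p ∧ rf p

theorem exists_tau {R i : ℕ} (h : InSpan R i) : ∃ r ≤ R, Tau r i := by
  classical
  have hex : ∃ r, InSpan r i := ⟨R, h⟩
  exact ⟨Nat.find hex, Nat.find_min' hex h, Nat.find_spec hex, fun r' hr => Nat.find_min hex hr⟩

theorem tau_unique {r r' i : ℕ} (h : Tau r i) (h' : Tau r' i) : r = r' := by
  rcases lt_trichotomy r r' with h1 | h1 | h1
  · exact absurd h.1 (h'.2 _ h1)
  · exact h1
  · exact absurd h'.1 (h.2 _ h1)

theorem SkN.node_iff {M c} (h : SkN M c) {i j r r' : ℕ} (hi : 0 < i) (hj : 0 < j)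
    (ht : Tau r i) (ht' : Tau r' j) (hiM : i + 4^(r'+1) < M) (hjM : j + 4^(r+1) < M) :
    node (c i j) ↔ r = r' := by
  unfold node
  rw [h.cf_iff hi (lt_of_le_of_lt (Nat.le_add_right _ _) hiM) ht hjM,
    h.rf_iff hj (lt_of_le_of_lt (Nat.le_add_right _ _) hjM) ht' hiM]
  constructor
  · rintro ⟨a, b⟩
    have h1 : ¬ r < r' := fun hlt => ht'.2 r hlt a
    have h2 : ¬ r' < r := fun hlt => ht.2 r' hlt b
    omega
  · rintro rfl
    exact ⟨ht'.1, ht.1⟩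

/-- at a node of scale r, bottom border iff j ≡ 4^r mod 4^(r+1) -/
theorem SkN.node_hb {M c} (h : SkN M c) {i j r : ℕ} (hi : 0 < i) (hj : 0 < j)
    (ht : Tau r i) (ht' : Tau r j) (hiM : i < M) (hjM : j < M) :
    hb (c i j) ↔ j % 4^(r+1) = 4^r := by
  rw [h.hb_iff hi hiM hj hjM]
  have hp : 0 < 4^r := by positivity
  constructor
  · rintro ⟨r', q, e, hs⟩
    have hr : r ≤ r' := by
      by_contra hlt
      exact ht.2 r' (by omega) hs
    obtain ⟨d, rfl⟩ := Nat.exists_eq_add_of_le hr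
    have e' : j = 4^r * (4^d * (2*q+1)) := by rw [e, pow_add, mul_assoc]
    have hdiv : j / 4^r = 4^d * (2*q+1) := by rw [e', Nat.mul_div_cancel_left _ hp]
    have h1 := ht'.1
    unfold InSpan at h1; rw [hdiv] at h1
    cases d with
    | zero =>
      rw [pow_zero, one_mul] at h1 e'
      rw [e', pow_succ, Nat.mul_mod_mul_left]
      have : (2*q+1) % 4 = 1 := by omega
      rw [this, mul_one]
    | succ d =>
      rw [pow_succ, show 4^d * 4 * (2*q+1) = 4 * (4^d * (2*q+1)) by ring] at h1
      omega
  · intro hm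
    have := Nat.div_add_mod j (4^(r+1))
    rw [hm] at this
    refine ⟨r, 2 * (j / 4^(r+1)), ?_, ht.1⟩
    generalize j / 4^(r+1) = y at this
    rw [← this, pow_succ]; ring

theorem SkN.node_vb {M c} (h : SkN M c) {i j r : ℕ} (hi : 0 < i) (hj : 0 < j)
    (ht : Tau r i) (ht' : Tau r j) (hiM : i < M) (hjM : j < M) :
    vb (c i j) ↔ i % 4^(r+1) = 4^r :=
  h.tr.node_hb hj hi ht' ht hjM hiM

end Rice

namespace Rice

structure Sys (C : Type) where
  left : C → Prop
  bot : C → Prop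
  ok : C → Prop
  CH : C → C → Prop
  CV : C → C → Prop

structure Grid {C} (S : Sys C) (n : ℕ) (g : ℕ → ℕ → C) : Prop where
  ok : ∀ a b, a < n → b < n → S.ok (g a b) ∧ (S.left (g a b) ↔ a = 0) ∧ (S.bot (g a b) ↔ b = 0)
  H : ∀ a b, a + 1 < n → b < n → S.CH (g a b) (g (a+1) b)
  V : ∀ a b, a < n → b + 1 < n → S.CV (g a b) (g a (b+1))

abbrev Cell (C : Type) := Sk × C × C

def cellOkF {C} (S : Sys C) (p : Cell C) : Prop := cellOk p.1 ∧
  (node p.1 → p.2.1 = p.2.2 ∧ (vb p.1 ↔ S.left p.2.1) ∧ (hb p.1 ↔ S.bot p.2.1) ∧ S.ok p.2.1)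
def HF {C} (S : Sys C) (p q : Cell C) : Prop := HRs p.1 q.1 ∧
  (node q.1 → vb q.1 ∨ S.CH p.2.1 q.2.1) ∧ (¬ node q.1 → q.2.1 = p.2.1)
def VF {C} (S : Sys C) (p q : Cell C) : Prop := HRs p.1.swap q.1.swap ∧
  (node q.1 → hb q.1 ∨ S.CV p.2.2 q.2.2) ∧ (¬ node q.1 → q.2.2 = p.2.2)

structure FullTiling {C} (S : Sys C) (c : ℤ → ℤ → Cell C) : Prop where
  ok : ∀ i j, cellOkF S (c i j)
  H : ∀ i j, HF S (c i j) (c (i+1) j)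
  V : ∀ i j, VF S (c i j) (c i (j+1))

theorem inSpan_shift {r R : ℕ} (h : r ≤ R) (i k : ℕ) : InSpan r (i + 4^(R+1) * k) ↔ InSpan r i := by
  obtain ⟨d, rfl⟩ := Nat.exists_eq_add_of_le h
  unfold InSpan
  have : (i + 4^(r+d+1) * k) / 4^r = i / 4^r + 4 * (4^d * k) := by
    rw [show 4^(r+d+1) * k = 4^r * (4 * (4^d * k)) by ring, Nat.add_mul_div_left _ _ (by positivity)]
  rw [this]; omega

theorem tau_shift {r R : ℕ} (h : r ≤ R) (i k : ℕ) : Tau r (i + 4^(R+1) * k) ↔ Tau r i := by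
  unfold Tau
  rw [inSpan_shift h]
  constructor <;> rintro ⟨a, b⟩ <;> refine ⟨a, fun r' hr => ?_⟩
  · rw [← inSpan_shift (show r' ≤ R by omega) i k]; exact b r' hr
  · rw [inSpan_shift (show r' ≤ R by omega) i k]; exact b r' hr

theorem inSpan_base {R x : ℕ} (hx : x < 2 * 4^R) : InSpan R (4^R + x) := by
  unfold InSpan
  have hp : 0 < 4^R := by positivity
  have h1 : (4^R + x) / 4^R = 1 + x / 4^R := by
    rw [Nat.add_div_left _ hp, add_comm]
  have : x / 4^R < 2 := by rw [Nat.div_lt_iff_lt_mul hp]; omega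
  rw [h1]; generalize x / 4^R = y at this; omega

theorem tau_witness {R k : ℕ} (hk : k ≤ R) : Tau R (4^R + (4^k - 1)) := by
  have hle : 4^k ≤ 4^R := Nat.pow_le_pow_right (by norm_num) hk
  have hk1 : 1 ≤ 4^k := Nat.one_le_pow _ _ (by norm_num)
  refine ⟨inSpan_base (by omega), fun r hr => ?_⟩
  unfold InSpan
  have hp : 0 < 4^r := by positivity
  obtain ⟨d, rfl⟩ := Nat.exists_eq_add_of_lt hr
  rw [show 4^(r+d+1) = 4^r * (4 * 4^d) by ring, Nat.mul_add_div hp]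
  rcases le_or_gt k r with h | h
  · have : 4^k ≤ 4^r := Nat.pow_le_pow_right (by norm_num) h
    rw [Nat.div_eq_of_lt (show 4^k - 1 < 4^r by omega)]; omega
  · obtain ⟨e, rfl⟩ := Nat.exists_eq_add_of_lt h
    have h2 : (4^(r+e+1) - 1) / 4^r = 4 * 4^e - 1 := by
      have he : 0 < 4^e := by positivity
      rw [Nat.div_eq_iff hp, show 4^(r+e+1) = 4^r * (4 * 4^e) by ring]
      have : (4 * 4^e - 1) * 4^r = 4^r * (4 * 4^e) - 4^r := by
        rw [Nat.sub_mul, one_mul, mul_comm]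
      rw [this]
      have : 4^r * 1 ≤ 4^r * (4 * 4^e) := Nat.mul_le_mul_left _ (by omega)
      constructor <;> omega
    rw [h2]
    have he : 0 < 4^e := by positivity
    omega

theorem tau_infinite (R : ℕ) : ({x | Tau R (4^R + x)} : Set ℕ).Infinite := by
  refine Set.infinite_of_injective_forall_mem (f := fun k => 4^(R+1) * k) ?_ ?_
  · intro a b h
    exact Nat.eq_of_mul_eq_mul_left (by positivity) h
  · intro k
    show Tau R (4^R + 4^(R+1) * k)
    rw [tau_shift le_rfl]
    simpa using tau_witness (Nat.zero_le R)

theorem tau_count (R k : ℕ) (hk : k ≤ R) : k < Nat.count (fun x => Tau R (4^R + x)) (4^k) := by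
  induction k with
  | zero =>
    rw [pow_zero, ← zero_add 1, Nat.count_succ, if_pos (by simpa using tau_witness (Nat.zero_le R))]; omega
  | succ k ih =>
    have h1 := ih (by omega)
    have hp : 0 < 4^k := by positivity
    have h2 : 4^(k+1) = (4^(k+1) - 1) + 1 := by rw [pow_succ]; omega
    rw [h2, Nat.count_succ, if_pos (tau_witness hk)]
    have := Nat.count_monotone (fun x => Tau R (4^R + x)) (show 4^k ≤ 4^(k+1) - 1 by rw [pow_succ]; omega)
    omega

theorem walk {α} (f : ℕ → α) (x : ℕ) : ∀ d, (∀ i, x < i → i < x + d + 1 → f i = f (i-1)) → f (x + d) = f x := by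
  intro d
  induction d with
  | zero => simp
  | succ d ih =>
    intro h
    rw [h (x + (d+1)) (by omega) (by omega)]
    exact ih fun i hi hi' => h i hi (by omega)

theorem QQ_skN {c : ℤ → ℤ → Sk} {T : ℕ} (h : QQ T c) (hH : ∀ i j, hbits (c i j) (c (i+1) j))
   (hV : ∀ i j, hbits (c i j).swap (c i (j+1)).swap) : SkN (2^T) (fun i j => c i j) := by
  have key : ∀ c : ℤ → ℤ → Sk, RowsOK T c → RowsN (2^T) (fun i j => c i j) := by
    intro c h i j s q hi hi' hj e
    have hs : s < T := by
      have : 2^s < 2^T := lt_of_le_of_lt (by rw [e]; exact Nat.le_mul_of_pos_right _ (by omega)) hj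
      exact (Nat.pow_lt_pow_iff_right (by norm_num)).1 this
    have := h.2 s hs q i
    subst e
    push_cast
    refine ⟨this.1, this.2.trans ?_⟩
    omega
  exact ⟨key c h.1, key (tr c) h.2, fun i j _ _ _ => by push_cast; exact hH i j,
    fun i j _ _ _ => by push_cast; exact hV i j⟩

theorem grid_of_tiling {C} (S : Sys C) (c0 : ℤ → ℤ → Cell C) (h0 : FullTiling S c0) (n : ℕ) :
    ∃ g, Grid S n g := by
  classical
  have hsk : SkTiling (fun i j => (c0 i j).1) :=
    ⟨fun i j => (h0.ok i j).1, fun i j => (h0.H i j).1.1, fun i j => (h0.V i j).1.1⟩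
  obtain ⟨ox, oy, hq⟩ := exists_QQ hsk (2*n+4)
  obtain ⟨c, hc⟩ : ∃ c : ℕ → ℕ → Cell C, c = fun (i j : ℕ) => c0 ((i:ℤ) + ox) ((j:ℤ) + oy) := ⟨_, rfl⟩
  have hN : SkN (2^(2*n+4)) (fun i j => (c i j).1) := by
    subst hc
    refine QQ_skN hq (fun i j => ?_) (fun i j => ?_)
    · have := (h0.H (i+ox) (j+oy)).1.2
      rw [add_right_comm] at this; exact this
    · have := (h0.V (i+ox) (j+oy)).1.2
      rw [add_right_comm] at this; exact this
  have hok : ∀ i j, cellOkF S (c i j) := by subst hc; exact fun i j => h0.ok _ _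
  have hH : ∀ i j, HF S (c i j) (c (i+1) j) := by
    subst hc; intro i j
    have := h0.H (i+ox) (j+oy)
    rw [add_right_comm] at this; push_cast; exact this
  have hV : ∀ i j, VF S (c i j) (c i (j+1)) := by
    subst hc; intro i j
    have := h0.V (i+ox) (j+oy)
    rw [add_right_comm] at this; push_cast; exact this
  clear hc hq hsk h0
  have hM : 2^(2*n+4) = 16 * 4^n := by rw [pow_add, pow_mul]; ring
  rw [hM] at hN
  have hp : 0 < 4^n := by positivity
  have hp1 : 4^(n+1) = 4 * 4^n := by ring
  set P : ℕ → Prop := fun x => Tau n (4^n + x) with hP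
  set x : ℕ → ℕ := fun a => 4^n + Nat.nth P a with hx
  have hxlt : ∀ a, a ≤ n → x a < 2 * 4^n := by
    intro a ha
    have h1 : Nat.nth P a < 4^a := Nat.nth_lt_of_lt_count (tau_count n a ha)
    have h2 : 4^a ≤ 4^n := Nat.pow_le_pow_right (by norm_num) ha
    simp only [hx]; omega
  have hxt : ∀ a, Tau n (x a) := fun a => Nat.nth_mem_of_infinite (tau_infinite n) a
  have hx0 : x 0 = 4^n := by
    have : Nat.nth P 0 = 0 := Nat.nth_zero_of_zero (by simpa [hP] using tau_witness (Nat.zero_le n))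
    simp [hx, this]
  have hxmono : StrictMono x := fun a b hab => by
    have : Nat.nth P a < Nat.nth P b := Nat.nth_strictMono (tau_infinite n) hab
    simp only [hx]; omega
  have hxge : ∀ a, 4^n ≤ x a := fun a => by simp [hx]
  have hgap : ∀ a i, x a < i → i < x (a+1) → ¬ Tau n i := by
    intro a i h1 h2 h3
    obtain ⟨y, rfl⟩ := Nat.exists_eq_add_of_le (show 4^n ≤ i from (hxge a).trans h1.le)
    have h3 : P y := h3
    have e := Nat.nth_count h3
    simp only [hx] at h1 h2
    rw [← e] at h1 h2
    have l1 := (Nat.nth_lt_nth (tau_infinite n)).1 (show Nat.nth P a < Nat.nth P (Nat.count P y) by omega)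
    have l2 := (Nat.nth_lt_nth (tau_infinite n)).1 (show Nat.nth P (Nat.count P y) < Nat.nth P (a+1) by omega)
    omega
  have htau : ∀ i, 4^n ≤ i → i < 2 * 4^n → ∃ r ≤ n, Tau r i := by
    intro i h1 h2
    obtain ⟨y, rfl⟩ := Nat.exists_eq_add_of_le h1
    exact exists_tau (inSpan_base (by omega))
  have hpow : ∀ r, r ≤ n → 4^(r+1) ≤ 4 * 4^n := fun r hr => by
    rw [← hp1]; exact Nat.pow_le_pow_right (by norm_num) (by omega)
  have hxmod : ∀ a, a ≤ n → (x a % 4^(n+1) = 4^n ↔ a = 0) := by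
    intro a ha
    have := hxlt a ha
    rw [Nat.mod_eq_of_lt (by omega), ← hx0]
    exact hxmono.injective.eq_iff
  have hnode : ∀ a b, a ≤ n → b ≤ n → node (c (x a) (x b)).1 := by
    intro a b ha hb
    have h1 := hxge a; have h2 := hxge b; have h3 := hxlt a ha; have h4 := hxlt b hb
    exact (hN.node_iff (by omega) (by omega) (hxt a) (hxt b) (by omega) (by omega)).2 rfl
  have hnvb : ∀ a b, a ≤ n → b ≤ n → (vb (c (x a) (x b)).1 ↔ a = 0) := by
    intro a b ha hb
    have h1 := hxge a; have h2 := hxge b; have h3 := hxlt a ha; have h4 := hxlt b hb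
    exact (hN.node_vb (by omega) (by omega) (hxt a) (hxt b) (by omega) (by omega)).trans (hxmod a ha)
  have hnhb : ∀ a b, a ≤ n → b ≤ n → (hb (c (x a) (x b)).1 ↔ b = 0) := by
    intro a b ha hb
    have h1 := hxge a; have h2 := hxge b; have h3 := hxlt a ha; have h4 := hxlt b hb
    exact (hN.node_hb (by omega) (by omega) (hxt a) (hxt b) (by omega) (by omega)).trans (hxmod b hb)
  have hnn : ∀ a b i, a < n → b ≤ n → x a < i → i < x (a+1) →
      ¬ node (c i (x b)).1 ∧ ¬ node (c (x b) i).1 := by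
    intro a b i ha hb hi hi'
    have h1 := hxge a; have h2 := hxge b; have h3 := hxlt (a+1) ha; have h4 := hxlt b hb
    obtain ⟨r, hr, ht⟩ := htau i (by omega) (by omega)
    have hrn : r ≠ n := by rintro rfl; exact hgap a i hi hi' ht
    have := hpow r hr
    rw [hN.node_iff (by omega) (by omega) ht (hxt b) (by omega) (by omega),
      hN.node_iff (by omega) (by omega) (hxt b) ht (by omega) (by omega)]
    omega
  refine ⟨fun a b => (c (x a) (x b)).2.1, ?_, ?_, ?_⟩
  · intro a b ha hb
    obtain ⟨e1, e2, e3⟩ := (hok (x a) (x b)).2 (hnode a b ha.le hb.le)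
    exact ⟨e3.2, e2.symm.trans (hnvb a b ha.le hb.le), e3.1.symm.trans (hnhb a b ha.le hb.le)⟩
  · intro a b ha hb
    have hlt := hxmono (show a < a+1 by omega)
    obtain ⟨d, hd⟩ := Nat.exists_eq_add_of_lt hlt
    have hw := walk (fun i => (c i (x b)).2.1) (x a) d (by
      intro i hi hi'
      have := (hH (i-1) (x b)).2.2
      rw [Nat.sub_add_cancel (by omega)] at this
      exact this (hnn a b i (by omega) hb.le hi (by omega)).1)
    have h3 := (hH (x a + d) (x b)).2.1
    rw [← hd] at h3
    rcases h3 (hnode _ _ ha.le hb.le) with h4 | h4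
    · exact absurd ((hnvb _ _ ha.le hb.le).1 h4) (by omega)
    · rwa [hw] at h4
  · intro a b ha hb
    have hlt := hxmono (show b < b+1 by omega)
    obtain ⟨d, hd⟩ := Nat.exists_eq_add_of_lt hlt
    have hw := walk (fun i => (c (x a) i).2.2) (x b) d (by
      intro i hi hi'
      have := (hV (x a) (i-1)).2.2
      rw [Nat.sub_add_cancel (by omega)] at this
      exact this (hnn b a i (by omega) ha.le hi (by omega)).2)
    have h3 := (hV (x a) (x b + d)).2.1
    rw [← hd] at h3
    show S.CV (c (x a) (x b)).2.1 (c (x a) (x (b+1))).2.1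
    rw [((hok (x a) (x b)).2 (hnode a b ha.le (by omega))).1,
      ((hok (x a) (x (b+1))).2 (hnode a (b+1) ha.le (by omega))).1]
    rcases h3 (hnode _ _ ha.le hb.le) with h4 | h4
    · exact absurd ((hnhb _ _ ha.le hb.le).1 h4) (by omega)
    · rwa [hw] at h4

end Rice

namespace Rice

def canH (i j : ℕ) : Half where
  h := ((2 * i / 2^(padicValNat 2 j) : ℕ) : ZMod 8)
  l := decide (2^(padicValNat 2 j) ∣ 2 * i)
  z := decide (padicValNat 2 j = 0)
  m := decide ((j / 2^(padicValNat 2 j)) % 4 = 1)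
  e := decide (padicValNat 2 j % 2 = 1)
  b1 := false
  b2 := false

/-- border predicate for a half -/
def hbH (H : Half) : Prop := H.e = false ∧ (H.h = 2 ∨ H.h = 3 ∨ H.h = 4 ∨ H.h = 5)
instance : DecidablePred hbH := fun p => by unfold hbH; infer_instance

/-- bit read along column `i`, upward. -/
def BD (i : ℕ) : ℕ → Bool
  | 0 => false
  | j+1 => if hbH (canH i (j+1)) then (canH i (j+1)).m else BD i j

/-- bit read along column `i`, downward from `M`. -/
def BUaux (M i : ℕ) : ℕ → Bool
  | 0 => false
  | k+1 => if hbH (canH i (M-(k+1)+1)) then !(canH i (M-(k+1)+1)).m else BUaux M i k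

def halfC (M i j : ℕ) : Half := { canH i j with b1 := BD j i, b2 := BUaux M j (M-i) }
def cC (M i j : ℕ) : Sk := (halfC M i j, halfC M j i)

theorem padic_form (s q : ℕ) : padicValNat 2 (2^s * (2*q+1)) = s := by
  rw [padicValNat.mul (by positivity) (by omega), padicValNat.prime_pow,
    padicValNat.eq_zero_of_not_dvd (by omega), add_zero]

theorem cC_swap (M i j) : (cC M i j).swap = cC M j i := rfl

theorem cC_hbits (M i j : ℕ) (hi : i < M) : hbits (cC M i j) (cC M (i+1) j) := by
  have e : M - i = (M - (i+1)) + 1 := by omega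
  have e2 : M - (M - (i+1) + 1) + 1 = i + 1 := by omega
  constructor
  · show BD j (i+1) = _
    rw [BD]; rfl
  · show BUaux M j (M-i) = _
    rw [e, BUaux, e2]; rfl

theorem canH_form (i s q : ℕ) : (canH i (2^s * (2*q+1))).h = ((2 * i / 2^s : ℕ) : ZMod 8) ∧
   ((canH i (2^s * (2*q+1))).l = true ↔ 2^s ∣ 2 * i) ∧ ((canH i (2^s * (2*q+1))).e = true ↔ s % 2 = 1) ∧
   ((canH i (2^s * (2*q+1))).m = true ↔ (2*q+1) % 4 = 1) ∧
   ((canH i (2^s * (2*q+1))).z = true ↔ s = 0) := by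
  unfold canH
  simp only [padic_form, decide_eq_true_eq]
  rw [Nat.mul_div_cancel_left _ (by positivity)]
  simp

theorem cC_rows (M M' : ℕ) : RowsN M' (cC M) := by
  rintro i j s q hi hi' hj rfl
  obtain ⟨h1, h2, h3, h4, -⟩ := canH_form i s q
  refine ⟨⟨?_, ?_, h3⟩, h4⟩
  · show (canH i _).h = _
    rw [h1]
    rw [← Int.cast_natCast (R := ZMod 8)]; push_cast; rfl
  · show (canH i _).l = true ↔ _
    rw [h2, ← Int.natCast_dvd_natCast]; push_cast; rfl

theorem cC_SkN (M : ℕ) : SkN M (cC M) :=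
  ⟨cC_rows M M, cC_rows M M, fun i j h _ _ => cC_hbits M i j (by omega),
   fun i j _ _ h => cC_hbits M j i (by omega)⟩

theorem cC_hstep (M i j : ℕ) (hi : 0 < i) (hj : 0 < j) : hstep (cC M i j) (cC M (i+1) j) := by
  refine ⟨rfl, rfl, rfl, ?_, ?_⟩
  · obtain ⟨s, q, rfl⟩ := exists_form i hi
    obtain ⟨s', q', e⟩ := exists_form (2^s * (2*q+1) + 1) (by omega)
    have h1 := (canH_form j s q).2.2.2.2
    have h2 := (canH_form j s' q').2.2.2.2
    rw [← e] at h2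
    show (canH j _).z = ! (canH j _).z
    rw [Bool.eq_iff_iff, h2, Bool.not_eq_true', Bool.eq_false_iff, ne_eq, h1]
    cases s with
    | zero =>
      cases s' with
      | zero => omega
      | succ s' => simp
    | succ s =>
      cases s' with
      | zero => simp
      | succ s' =>
        exfalso
        rw [pow_succ, pow_succ, show 2^s * 2 * (2*q+1) = 2 * (2^s * (2*q+1)) by ring,
          show 2^s' * 2 * (2*q'+1) = 2 * (2^s' * (2*q'+1)) by ring] at e
        omega
  · obtain ⟨t, q, rfl⟩ := exists_form j hj
    obtain ⟨h1, -, -, -, h5⟩ := canH_form i t q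
    obtain ⟨g1, g2, -, -, -⟩ := canH_form (i+1) t q
    show (canH (i+1) _).h = (canH i _).h + (if (canH i _).z = true then 2 else if (canH (i+1) _).l = true then 1 else 0)
    rw [h1, g1]
    simp only [h5, g2]
    cases t with
    | zero => simp; ring
    | succ t =>
      rw [if_neg (by omega), pow_succ', Nat.mul_div_mul_left _ _ (by norm_num),
        Nat.mul_div_mul_left _ _ (by norm_num), Nat.succ_div]
      simp only [Nat.mul_dvd_mul_iff_left (show 0 < 2 by norm_num)]
      split_ifs <;> simp

theorem natCast8 (n k : ℕ) (hk : k < 8) : (n : ZMod 8) = (k : ZMod 8) ↔ n % 8 = k := by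
  rw [ZMod.natCast_eq_natCast_iff]; unfold Nat.ModEq; omega

theorem cC_cellOk (M i j : ℕ) (hi : 0 < i) (hj : 0 < j) : cellOk (cC M i j) := by
  have key : ∀ i j s p t q : ℕ, s ≤ t → i = 2^s * (2*p+1) → j = 2^t * (2*q+1) → cellOk (cC M i j) := by
    intro i j s p t q hst hi hj
    obtain ⟨r1, r2, r3, r4, r5⟩ := canH_form i t q
    obtain ⟨c1, c2, c3, c4, c5⟩ := canH_form j s p
    rw [← hj] at r1 r2 r3 r4 r5
    rw [← hi] at c1 c2 c3 c4 c5
    have z1 : cZ (cC M i j) := by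
      show (canH i j).z = true → (canH i j).e = false ∧ (canH i j).l = true
      rw [r5, r2, Bool.eq_false_iff, ne_eq, r3]
      rintro rfl; simp
    have z2 : cZ (cC M i j).swap := by
      show (canH j i).z = true → (canH j i).e = false ∧ (canH j i).l = true
      rw [c5, c2, Bool.eq_false_iff, ne_eq, c3]
      rintro rfl; simp
    obtain ⟨d, rfl⟩ := Nat.exists_eq_add_of_le hst
    have cl : (canH j i).l = true := c2.2 (by
      rw [hj, pow_add]; exact ⟨2 * (2^d * (2*q+1)), by ring⟩)
    have ch : (canH j i).h = ((2 * (2^d * (2*q+1)) : ℕ) : ZMod 8) := by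
      rw [c1, hj, pow_add, show 2 * (2^s * 2^d * (2*q+1)) = 2^s * (2 * (2^d * (2*q+1))) by ring,
        Nat.mul_div_cancel_left _ (by positivity)]
    rcases d with _ | _ | d
    · have rl : (canH i j).l = true := r2.2 ⟨2 * (2*p+1), by rw [hi]; ring⟩
      have rh : (canH i j).h = ((2 * (2*p+1) : ℕ) : ZMod 8) := by
        rw [r1, hi, show 2 * (2^s * (2*p+1)) = 2^(s+0) * (2 * (2*p+1)) by ring,
          Nat.mul_div_cancel_left _ (by positivity)]
      have hE : cE (cC M i j) := by
        refine ⟨rl, cl, ?_, ?_, ?_, ?_, ?_⟩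
        · show (canH i j).h = 2 ∨ (canH i j).h = 6
          have a := natCast8 (2*(2*p+1)) 2 (by norm_num)
          have b := natCast8 (2*(2*p+1)) 6 (by norm_num)
          rw [← rh] at a b
          push_cast at a b
          rw [a, b]; omega
        · show (canH j i).h = 2 ∨ (canH j i).h = 6
          have a := natCast8 (2*(2^0*(2*q+1))) 2 (by norm_num)
          have b := natCast8 (2*(2^0*(2*q+1))) 6 (by norm_num)
          rw [← ch] at a b
          push_cast at a b
          rw [a, b]; omega
        · show (canH i j).e = (canH j i).e
          rw [Bool.eq_iff_iff, r3, c3]; rfl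
        · show (canH i j).h = 2 ↔ (canH j i).m = true
          have a := natCast8 (2*(2*p+1)) 2 (by norm_num)
          rw [← rh] at a
          push_cast at a
          rw [a, c4]; omega
        · show (canH j i).h = 2 ↔ (canH i j).m = true
          have a := natCast8 (2*(2^0*(2*q+1))) 2 (by norm_num)
          rw [← ch] at a
          push_cast at a
          rw [a, r4]; omega
      exact ⟨Or.inl hE, z1, z2, fun _ _ => hE⟩
    · have rl : (canH i j).l = true := r2.2 ⟨(2*p+1), by rw [hi]; ring⟩
      have rh : (canH i j).h = ((2*p+1 : ℕ) : ZMod 8) := by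
        rw [r1, hi, show 2 * (2^s * (2*p+1)) = 2^(s+(0+1)) * (2*p+1) by ring,
          Nat.mul_div_cancel_left _ (by positivity)]
      refine ⟨Or.inr (Or.inl ⟨rl, cl, ?_, ?_, ?_, ?_⟩), z1, z2, fun h => ?_⟩
      · show (canH i j).h = 1 ∨ (canH i j).h = 3 ∨ (canH i j).h = 5 ∨ (canH i j).h = 7
        have a := natCast8 (2*p+1) 1 (by norm_num)
        have b := natCast8 (2*p+1) 3 (by norm_num)
        have c := natCast8 (2*p+1) 5 (by norm_num)
        have d := natCast8 (2*p+1) 7 (by norm_num)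
        rw [← rh] at a b c d
        rw [Nat.cast_one] at a
        rw [Nat.cast_ofNat] at b c d
        rw [a, b, c, d]; omega
      · show (canH j i).h = 4
        have a := natCast8 (2*(2^(0+1)*(2*q+1))) 4 (by norm_num)
        rw [← ch] at a
        rw [Nat.cast_ofNat] at a
        rw [a]; omega
      · show (canH i j).e = ! (canH j i).e
        rw [Bool.eq_iff_iff, r3, Bool.not_eq_true', Bool.eq_false_iff, ne_eq, c3]; omega
      · show (canH i j).h = 1 ∨ (canH i j).h = 5 ↔ (canH j i).m = true
        have a := natCast8 (2*p+1) 1 (by norm_num)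
        have c := natCast8 (2*p+1) 5 (by norm_num)
        rw [← rh] at a c
        rw [Nat.cast_one] at a
        rw [Nat.cast_ofNat] at c
        rw [a, c, c4]; omega
      · exact absurd (r5.1 h) (by omega)
    · refine ⟨Or.inr (Or.inr (Or.inl ⟨?_, cl, ?_⟩)), z1, z2, fun h => ?_⟩
      · show (canH i j).l = false
        rw [Bool.eq_false_iff, ne_eq, r2, hi,
          show 2 * (2^s * (2*p+1)) = 2^s * (2 * (2*p+1)) by ring, pow_add,
          Nat.mul_dvd_mul_iff_left (by positivity)]
        rintro ⟨k, hk⟩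
        rw [show 2^(d+1+1) * k = 4 * (2^d * k) by ring] at hk
        omega
      · show (canH j i).h = 0
        have a := natCast8 (2*(2^(d+1+1)*(2*q+1))) 0 (by norm_num)
        rw [← ch] at a
        rw [Nat.cast_zero] at a
        rw [a, show (2*(2^(d+1+1)*(2*q+1))) = 8 * (2^d * (2*q+1)) by ring]; omega
      · exact absurd (r5.1 h) (by omega)
  obtain ⟨s, p, hi⟩ := exists_form i hi
  obtain ⟨t, q, hj⟩ := exists_form j hj
  rcases le_total s t with h | h
  · exact key i j s p t q h hi hj
  · exact cellOk_swap (key j i t q s p h hj hi)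

end Rice

namespace Rice

open Filter in
theorem compact {ι A : Type*} [Finite A] (f : ℕ → ι → A) :
    ∃ x : ι → A, ∀ p, ∀ᶠ n in (hyperfilter ℕ : Filter ℕ), f n p = x p := by
  have : ∀ p, ∃ a, ∀ᶠ n in (hyperfilter ℕ : Filter ℕ), f n p = a := by
    intro p
    have h : (⋃ a ∈ (Set.univ : Set A), {n | f n p = a}) ∈ hyperfilter ℕ := by
      have e : (⋃ a ∈ (Set.univ : Set A), {n | f n p = a}) = Set.univ := by ext n; simp
      rw [e]; exact Filter.univ_mem
    obtain ⟨a, -, ha⟩ := (Ultrafilter.finite_biUnion_mem_iff Set.finite_univ).1 h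
    exact ⟨a, ha⟩
  choose x hx using this
  exact ⟨x, hx⟩

open Filter in
theorem hyper_ge (k : ℕ) : ∀ᶠ n in (hyperfilter ℕ : Filter ℕ), k ≤ n := by
  have : ∀ᶠ n in (cofinite : Filter ℕ), k ≤ n := by
    rw [Nat.cofinite_eq_atTop]; exact eventually_ge_atTop k
  exact hyperfilter_le_cofinite this

instance : Finite Half := by
  refine Finite.of_injective (fun H : Half => (H.h, H.l, H.z, H.m, H.e, H.b1, H.b2)) ?_
  rintro ⟨a,b,c,d,e,f,g⟩ ⟨a',b',c',d',e',f',g'⟩ h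
  simpa using h

/-- position of `i` inside its period at scale `r` -/
def mm (r i : ℕ) : ℕ := (i - 4^r) % 4^(r+1)
def NN (r i : ℕ) : ℕ := Nat.count (fun x => Tau r (4^r + x)) (mm r i + 1)

theorem tau_mm {r i : ℕ} (h : 4^r ≤ i) : Tau r i ↔ Tau r (4^r + mm r i) := by
  have : i = (4^r + mm r i) + 4^(r+1) * ((i - 4^r) / 4^(r+1)) := by
    have := Nat.mod_add_div (i - 4^r) (4^(r+1))
    unfold mm; omega
  conv_lhs => rw [this]
  exact tau_shift le_rfl _ _

theorem mm_zero {r i : ℕ} (h : 4^r ≤ i) : mm r i = 0 ↔ i % 4^(r+1) = 4^r := by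
  unfold mm
  obtain ⟨y, rfl⟩ := Nat.exists_eq_add_of_le h
  rw [Nat.add_sub_cancel_left]
  have hlt : 4^r < 4^(r+1) := Nat.pow_lt_pow_right (by norm_num) (by omega)
  constructor
  · intro h
    rw [Nat.add_mod, h, add_zero, Nat.mod_mod, Nat.mod_eq_of_lt hlt]
  · intro h
    have h1 : (4^r + y) ≡ 4^r + 0 [MOD 4^(r+1)] := by
      unfold Nat.ModEq; rw [h, add_zero, Nat.mod_eq_of_lt hlt]
    have := Nat.ModEq.add_left_cancel' _ h1
    unfold Nat.ModEq at this
    simpa using this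

theorem tau_pow (r : ℕ) : Tau r (4^r + 0) := by simpa using tau_witness (Nat.zero_le r)

theorem NN_pos (r i : ℕ) : 1 ≤ NN r i := by
  unfold NN
  have : Nat.count (fun x => Tau r (4^r + x)) 1 = 1 := by
    rw [← zero_add 1, Nat.count_succ, if_pos (tau_pow r)]; simp
  have h2 := Nat.count_monotone (fun x => Tau r (4^r + x)) (show 1 ≤ mm r i + 1 by omega)
  omega

theorem NN_one {r i : ℕ} (h : 4^r ≤ i) (ht : Tau r i) : NN r i = 1 ↔ mm r i = 0 := by
  have h1 : Nat.count (fun x => Tau r (4^r + x)) 1 = 1 := by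
    rw [← zero_add 1, Nat.count_succ, if_pos (tau_pow r)]; simp
  unfold NN
  constructor
  · intro h0
    by_contra hne
    rw [Nat.count_succ, if_pos ((tau_mm h).1 ht)] at h0
    have h2 := Nat.count_monotone (fun x => Tau r (4^r + x)) (show 1 ≤ mm r i by omega)
    omega
  · intro h0; rw [h0, zero_add]; exact h1

theorem mm_succ {r i : ℕ} (h : 4^r ≤ i) (hm : mm r (i+1) ≠ 0) : mm r (i+1) = mm r i + 1 := by
  unfold mm at *
  have e : i + 1 - 4^r = (i - 4^r) + 1 := by omega
  rw [e] at hm ⊢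
  have hp : 0 < 4^(r+1) := by positivity
  have := Nat.mod_lt (i - 4^r) hp
  rcases Nat.lt_or_ge ((i - 4^r) % 4^(r+1) + 1) (4^(r+1)) with h1 | h1
  · rw [← Nat.mod_eq_of_lt h1, Nat.mod_add_mod]
  · exfalso; apply hm
    have e1 : (i - 4^r) % 4^(r+1) + 1 = 4^(r+1) := by omega
    rw [← Nat.mod_add_mod, e1, Nat.mod_self]

theorem NN_succ {r i : ℕ} (h : 4^r ≤ i) (hm : mm r (i+1) ≠ 0) :
    NN r (i+1) = NN r i + if Tau r (i+1) then 1 else 0 := by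
  unfold NN
  simp only [tau_mm (show 4^r ≤ i+1 by omega)]
  rw [Nat.count_succ, mm_succ h hm]

noncomputable def tf (i : ℕ) : ℕ := open Classical in if h : ∃ r, Tau r i then h.choose else 0
theorem tf_eq {r i : ℕ} (h : Tau r i) : tf i = r := by
  unfold tf
  rw [dif_pos ⟨r, h⟩]
  exact tau_unique (Exists.choose_spec (⟨r, h⟩ : ∃ r, Tau r i)) h

noncomputable def boxC {C} (g : ℕ → ℕ → C) (M i j : ℕ) : Cell C :=
  (cC M i j, g (NN (tf j) i - 1) (NN (tf j) j - 1), g (NN (tf i) i - 1) (NN (tf i) j - 1))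

theorem box_tiling {C} (S : Sys C) (g : ℕ → ℕ → C) (hg : ∀ n, Grid S n g) (R : ℕ) (i j : ℕ)
    (hi : 4^R ≤ i) (hi' : i + 1 < 2 * 4^R) (hj : 4^R ≤ j) (hj' : j + 1 < 2 * 4^R) :
    cellOkF S (boxC g (16 * 4^R) i j) ∧ HF S (boxC g (16 * 4^R) i j) (boxC g (16 * 4^R) (i+1) j) ∧
    VF S (boxC g (16 * 4^R) i j) (boxC g (16 * 4^R) i (j+1)) := by
  have hN := cC_SkN (16 * 4^R)
  have hp : 0 < 4^R := by positivity
  have htau : ∀ i, 4^R ≤ i → i < 2 * 4^R → ∃ r ≤ R, Tau r i := by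
    intro i h1 h2
    obtain ⟨y, rfl⟩ := Nat.exists_eq_add_of_le h1
    exact exists_tau (inSpan_base (by omega))
  have hpow : ∀ r, r ≤ R → 4^(r+1) ≤ 4 * 4^R ∧ 4^r ≤ 4^R := fun r hr =>
    ⟨by rw [← pow_succ']; exact Nat.pow_le_pow_right (by norm_num) (by omega),
     Nat.pow_le_pow_right (by norm_num) (by omega)⟩
  obtain ⟨ri, hri, ti⟩ := htau i hi (by omega)
  obtain ⟨rj, hrj, tj⟩ := htau j hj (by omega)
  obtain ⟨ri', hri', ti'⟩ := htau (i+1) (by omega) (by omega)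
  obtain ⟨rj', hrj', tj'⟩ := htau (j+1) (by omega) (by omega)
  have e1 := tf_eq ti
  have e2 := tf_eq tj
  have e3 := tf_eq ti'
  have e4 := tf_eq tj'
  obtain ⟨p1, p1'⟩ := hpow ri hri
  obtain ⟨p2, p2'⟩ := hpow rj hrj
  obtain ⟨p3, p3'⟩ := hpow ri' hri'
  obtain ⟨p4, p4'⟩ := hpow rj' hrj'
  refine ⟨⟨cC_cellOk _ i j (by omega) (by omega), fun hn => ?_⟩,
    ⟨⟨cC_hstep _ i j (by omega) (by omega), cC_hbits _ i j (by omega)⟩, fun hn => ?_, fun hn => ?_⟩,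
    ⟨⟨cC_hstep _ j i (by omega) (by omega), cC_hbits _ j i (by omega)⟩, fun hn => ?_, fun hn => ?_⟩⟩
  · have hr : ri = rj := (hN.node_iff (by omega) (by omega) ti tj (by omega) (by omega)).1 hn
    subst hr
    have hg' := (hg (max (NN ri i) (NN ri j) + 1)).ok (NN ri i - 1) (NN ri j - 1) (by omega) (by omega)
    simp only [boxC, e1, e2]
    have n1 := NN_pos ri i
    have n2 := NN_pos ri j
    refine ⟨trivial, ?_, ?_, hg'.1⟩
    · rw [hN.node_vb (by omega) (by omega) ti tj (by omega) (by omega), hg'.2.1, ← mm_zero (by omega),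
        ← NN_one (by omega) ti]; omega
    · rw [hN.node_hb (by omega) (by omega) ti tj (by omega) (by omega), hg'.2.2, ← mm_zero (by omega),
        ← NN_one (by omega) tj]; omega
  · have hr : ri' = rj := (hN.node_iff (by omega) (by omega) ti' tj (by omega) (by omega)).1 hn
    subst hr
    simp only [boxC, e2]
    rw [hN.node_vb (by omega) (by omega) ti' tj (by omega) (by omega), ← mm_zero (by omega)]
    by_cases h0 : mm ri' (i+1) = 0
    · exact Or.inl h0
    · right
      have n1 := NN_pos ri' i
      have := NN_succ (by omega) h0
      rw [if_pos ti'] at this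
      rw [show NN ri' (i+1) - 1 = (NN ri' i - 1) + 1 by omega]
      exact (hg (max (NN ri' i) (NN ri' j) + 1)).H _ _ (by omega) (by omega)
  · have hr : ri' ≠ rj := fun h =>
      hn ((hN.node_iff (by omega) (by omega) ti' tj (by omega) (by omega)).2 h)
    simp only [boxC, e2]
    have hnt : ¬ Tau rj (i+1) := fun h => hr (tau_unique ti' h)
    have h0 : mm rj (i+1) ≠ 0 := fun h => hnt ((tau_mm (by omega)).2 (by rw [h]; exact tau_pow rj))
    rw [NN_succ (by omega) h0, if_neg hnt, add_zero]
  · have hr : ri = rj' := (hN.node_iff (by omega) (by omega) ti tj' (by omega) (by omega)).1 hn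
    subst hr
    simp only [boxC, e1]
    rw [hN.node_hb (by omega) (by omega) ti tj' (by omega) (by omega), ← mm_zero (by omega)]
    by_cases h0 : mm ri (j+1) = 0
    · exact Or.inl h0
    · right
      have n1 := NN_pos ri j
      have := NN_succ (by omega) h0
      rw [if_pos tj'] at this
      rw [show NN ri (j+1) - 1 = (NN ri j - 1) + 1 by omega]
      exact (hg (max (NN ri i) (NN ri j) + 1)).V _ _ (by omega) (by omega)
  · have hr : ri ≠ rj' := fun h =>
      hn ((hN.node_iff (by omega) (by omega) ti tj' (by omega) (by omega)).2 h)
    simp only [boxC, e1]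
    have hnt : ¬ Tau ri (j+1) := fun h => hr (tau_unique h tj')
    have h0 : mm ri (j+1) ≠ 0 := fun h => hnt ((tau_mm (by omega)).2 (by rw [h]; exact tau_pow ri))
    rw [NN_succ (by omega) h0, if_neg hnt, add_zero]

theorem tiling_of_grid {C} [Finite C] (S : Sys C) (g : ℕ → ℕ → C) (hg : ∀ n, Grid S n g) :
    ∃ c, FullTiling S c := by
  let off : ℕ → ℕ := fun R => 4^R + R
  obtain ⟨x, hx⟩ := compact (fun (R : ℕ) (p : ℤ × ℤ) =>
    boxC g (16 * 4^R) (p.1 + off R).toNat (p.2 + off R).toNat)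
  have key : ∀ i j : ℤ, cellOkF S (x (i,j)) ∧ HF S (x (i,j)) (x (i+1,j)) ∧ VF S (x (i,j)) (x (i,j+1)) := by
    intro i j
    obtain ⟨R, h1, h2, h3, h4⟩ := ((hx (i,j)).and ((hx (i+1,j)).and ((hx (i,j+1)).and
      (hyper_ge (i.natAbs + j.natAbs + 2))))).exists
    have hlt : 2 * R < 4^R := by
      have h5 : 2 * R + 1 ≤ 4^R := by
        clear * -
        induction R with
        | zero => simp
        | succ n ih => rw [pow_succ]; omega
      omega
    obtain ⟨a, ha⟩ := Int.eq_ofNat_of_zero_le (show 0 ≤ i + R by omega)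
    obtain ⟨b, hb⟩ := Int.eq_ofNat_of_zero_le (show 0 ≤ j + R by omega)
    have e1 : (i + off R).toNat = 4^R + a := by
      simp only [off]; push_cast
      have : (i + (4^R + R : ℤ)) = ((4^R + a : ℕ) : ℤ) := by push_cast; linarith
      rw [this, Int.toNat_natCast]
    have e2 : (j + off R).toNat = 4^R + b := by
      simp only [off]; push_cast
      have : (j + (4^R + R : ℤ)) = ((4^R + b : ℕ) : ℤ) := by push_cast; linarith
      rw [this, Int.toNat_natCast]
    have e3 : (i + 1 + off R).toNat = 4^R + a + 1 := by
      simp only [off]; push_cast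
      have : (i + 1 + (4^R + R : ℤ)) = ((4^R + a + 1 : ℕ) : ℤ) := by push_cast; linarith
      rw [this, Int.toNat_natCast]
    have e4 : (j + 1 + off R).toNat = 4^R + b + 1 := by
      simp only [off]; push_cast
      have : (j + 1 + (4^R + R : ℤ)) = ((4^R + b + 1 : ℕ) : ℤ) := by push_cast; linarith
      rw [this, Int.toNat_natCast]
    simp only [e1, e2, e3, e4] at h1 h2 h3
    have := box_tiling S g hg R (4^R + a) (4^R + b) (by omega) (by omega) (by omega) (by omega)
    rwa [h1, h2, h3] at this
  exact ⟨fun i j => x (i,j), fun i j => (key i j).1, fun i j => (key i j).2.1, fun i j => (key i j).2.2⟩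

end Rice

namespace Rice

/-- Abstract one-way machine: a finite control reading cell 0, with local update. -/
abbrev Mach (Q G : Type) := Q → G → Option (Q × (Option G → G → G → G))

def Mach.step {Q G} (m : Mach Q G) (c : Q × (ℕ → G)) : Option (Q × (ℕ → G)) :=
  (m c.1 (c.2 0)).map fun p => (p.1, fun a => p.2 (if a = 0 then none else some (c.2 (a-1))) (c.2 a) (c.2 (a+1)))

def Mach.run {Q G} (m : Mach Q G) (c : Q × (ℕ → G)) : ℕ → Option (Q × (ℕ → G))
  | 0 => some c
  | t+1 => (m.run c t).bind m.step

structure CF (Q G : Type) where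
  st : Q
  top : G
  gl : Option G
  g : G
  gr : G
  b : Bool

instance {Q G} [Finite Q] [Finite G] : Finite (CF Q G) := by
  refine Finite.of_injective (fun H : CF Q G => (H.st, H.top, H.gl, H.g, H.gr, H.b)) ?_
  rintro ⟨a,b,c,d,e,f⟩ ⟨a',b',c',d',e',f'⟩ h
  simpa using h

def okF {Q G} (q0 : Q) (c : CF Q G) (l0 : Prop) (s : G) : Prop :=
  (c.gl = none → c.top = c.g) ∧ (c.b = true → c.st = q0 ∧ c.g = s ∧ (c.gl = none → l0))
def CHF {Q G} (c c' : CF Q G) (ls : Prop) : Prop :=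
  c.st = c'.st ∧ c.top = c'.top ∧ c.gr = c'.g ∧ c'.gl = some c.g ∧ (c'.b = true → ls)
def CVF {Q G} (m : Mach Q G) (c c' : CF Q G) : Prop :=
  ∃ p ∈ m c.st c.top, c'.st = p.1 ∧ c'.g = p.2 c.gl c.g c.gr

def mSys {Q G} (m : Mach Q G) (q0 : Q) (L : ℕ) (S0 : ℕ → G) : Sys (CF Q G × Fin (L+1)) where
  left c := c.1.gl = none
  bot c := c.1.b = true
  ok c := okF q0 c.1 (c.2.1 = 0) (S0 c.2.1)
  CH c c' := CHF c.1 c'.1 (c'.2.1 = min (c.2.1 + 1) L)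
  CV c c' := CVF m c.1 c'.1

theorem run_of_grid {Q G} (m : Mach Q G) (q0 : Q) (L : ℕ) (S0 : ℕ → G)
    (hS : ∀ a, L ≤ a → S0 a = S0 L) (n : ℕ) (c : ℕ → ℕ → CF Q G × Fin (L+1))
    (h : Grid (mSys m q0 L S0) n c) (t : ℕ) :
    t < n → ∃ p, m.run (q0, S0) t = some p ∧ ∀ s, s + t < n →
      (c s t).1.st = p.1 ∧ (c s t).1.top = p.2 0 ∧ (c s t).1.g = p.2 s := by
  have hrow : ∀ t (p : Q × (ℕ → G)), t < n → (∀ s, s + t < n → (c s t).1.st = p.1 ∧ (c s t).1.g = p.2 s) →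
      ∀ s, s + t < n → (c s t).1.st = p.1 ∧ (c s t).1.top = p.2 0 ∧ (c s t).1.g = p.2 s := by
    intro t p ht hp s hs
    refine ⟨(hp s hs).1, ?_, (hp s hs).2⟩
    induction s with
    | zero =>
      have := (h.ok 0 t (by omega) ht)
      rw [this.1.1 (this.2.1.2 rfl)]
      exact (hp 0 hs).2
    | succ s ih =>
      rw [← (h.H s t (by omega) ht).2.1]
      exact ih (by omega)
  induction t with
  | zero =>
    intro hn
    refine ⟨(q0, S0), rfl, hrow 0 _ hn fun s hs => ?_⟩
    have hb : ∀ s, s < n → (c s 0).1.b = true := fun s hs => (h.ok s 0 hs hn).2.2.2 rfl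
    have hl : (c s 0).2.1 = min s L := by
      induction s with
      | zero =>
        have := h.ok 0 0 hn hn
        rw [(this.1.2 (hb 0 hn)).2.2 (this.2.1.2 rfl)]; simp
      | succ s ih =>
        rw [(h.H s 0 (by omega) hn).2.2.2.2 (hb (s+1) (by omega)), ih (by omega)]; omega
    have := (h.ok s 0 (by omega) hn).1.2 (hb s (by omega))
    refine ⟨this.1, ?_⟩
    rw [this.2.1, hl]
    rcases le_total s L with h1 | h1
    · rw [min_eq_left h1]
    · rw [min_eq_right h1]; exact (hS s h1).symm
  | succ t ih =>
    intro hn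
    obtain ⟨p, hp, hc⟩ := ih (by omega)
    obtain ⟨⟨q', u⟩, hq, -, -⟩ := h.V 0 t (by omega) hn
    obtain ⟨e1, e2, -⟩ := hc 0 (by omega)
    rw [e1, e2] at hq
    have hq' : m p.1 (p.2 0) = some (q', u) := hq
    refine ⟨(q', fun a => u (if a = 0 then none else some (p.2 (a-1))) (p.2 a) (p.2 (a+1))), ?_, ?_⟩
    · rw [Mach.run, hp]; simp [Mach.step, hq']
    · refine hrow (t+1) _ hn fun s hs => ?_
      obtain ⟨p', hp', a1, a2⟩ := h.V s t (by omega) hn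
      obtain ⟨e1, e2, e3⟩ := hc s (by omega)
      rw [e1, e2, hq'] at hp'
      obtain rfl : (q', u) = p' := by simpa using hp'
      refine ⟨a1, ?_⟩
      rw [a2, e3, (h.H s t (by omega) (by omega)).2.2.1, (hc (s+1) (by omega)).2.2]
      cases s with
      | zero =>
        have hgl : (c 0 t).1.gl = none := (h.ok 0 t (by omega) (by omega)).2.1.2 rfl
        rw [hgl]; rfl
      | succ s =>
        rw [(h.H s t (by omega) (by omega)).2.2.2.1, (hc s (by omega)).2.2]; simp

theorem grid_of_run {Q G} (m : Mach Q G) (q0 : Q) (L : ℕ) (S0 : ℕ → G)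
    (hS : ∀ a, L ≤ a → S0 a = S0 L) (h : ∀ t, m.run (q0, S0) t ≠ none) :
    ∃ c, ∀ n, Grid (mSys m q0 L S0) n c := by
  have h' : ∀ t, ∃ p, m.run (q0, S0) t = some p := fun t => Option.ne_none_iff_exists'.1 (h t)
  choose p hp using h'
  have h0 : p 0 = (q0, S0) := by simpa [Mach.run] using (hp 0).symm
  have hs : ∀ t, m.step (p t) = some (p (t+1)) := by
    intro t
    have := hp (t+1)
    rw [Mach.run, hp t] at this
    simpa using this
  refine ⟨fun a b => (⟨(p b).1, (p b).2 0, if a = 0 then none else some ((p b).2 (a-1)), (p b).2 a,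
    (p b).2 (a+1), decide (b = 0)⟩, ⟨min a L, by omega⟩), fun n => ⟨?_, ?_, ?_⟩⟩
  · intro a b _ _
    refine ⟨⟨?_, ?_⟩, ?_, ?_⟩
    · simp only [ite_eq_left_iff, reduceCtorEq, imp_false, not_not]
      rintro rfl; rfl
    · simp only [ite_eq_left_iff, reduceCtorEq, imp_false, not_not, decide_eq_true_eq]
      rintro rfl
      rw [h0]
      refine ⟨rfl, ?_, by rintro rfl; simp⟩
      rcases le_total a L with h1 | h1
      · rw [min_eq_left h1]
      · rw [min_eq_right h1, ← hS a h1]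
    · simp [mSys]
    · simp [mSys]
  · intro a b _ _
    refine ⟨rfl, rfl, rfl, by simp, ?_⟩
    intro _; simp only; omega
  · intro a b _ _
    have := hs b
    unfold Mach.step at this
    rw [Option.map_eq_some_iff] at this
    obtain ⟨x, hx, e⟩ := this
    refine ⟨x, hx, ?_, ?_⟩
    · simp only [← e]
    · simp only [← e]

/-- Domino characterisation of non-halting. -/
theorem tiling_iff_run {Q G} [Finite Q] [Finite G] (m : Mach Q G) (q0 : Q) (L : ℕ) (S0 : ℕ → G)
    (hS : ∀ a, L ≤ a → S0 a = S0 L) :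
    (∃ c, FullTiling (mSys m q0 L S0) c) ↔ ∀ t, m.run (q0, S0) t ≠ none := by
  constructor
  · rintro ⟨c, hc⟩ t
    obtain ⟨g, hg⟩ := grid_of_tiling _ c hc (t+1)
    obtain ⟨p, hp, -⟩ := run_of_grid m q0 L S0 hS _ g hg t (by omega)
    rw [hp]; simp
  · intro h
    obtain ⟨c, hc⟩ := grid_of_run m q0 L S0 hS h
    exact tiling_of_grid _ c hc

end Rice

namespace Rice
open Turing StateTransition

theorem run_succ_of {Q G} (m : Mach Q G) (c : Q × (ℕ → G)) (b) (h : Reaches m.step c b) :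
    ∃ t, m.run c t = some b := by
  induction h with
  | refl => exact ⟨0, rfl⟩
  | tail _ h ih =>
    obtain ⟨t, ht⟩ := ih
    exact ⟨t+1, by rw [Mach.run, ht]; exact h⟩

theorem reaches_of_run {Q G} (m : Mach Q G) (c : Q × (ℕ → G)) (t : ℕ) : ∀ b, m.run c t = some b →
    Reaches m.step c b := by
  induction t with
  | zero => intro b h; simp only [Mach.run, Option.some.injEq] at h; subst h; exact Relation.ReflTransGen.refl
  | succ t ih =>
    intro b h
    rw [Mach.run, Option.bind_eq_some_iff] at h
    obtain ⟨a, ha, hb⟩ := h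
    exact Relation.ReflTransGen.tail (ih a ha) hb

theorem dom_iff_run {Q G} (m : Mach Q G) (c : Q × (ℕ → G)) :
    (eval m.step c).Dom ↔ ∃ t, m.run c t = none := by
  rw [Part.dom_iff_mem]
  constructor
  · rintro ⟨b, hb⟩
    rw [mem_eval] at hb
    obtain ⟨t, ht⟩ := run_succ_of m c b hb.1
    exact ⟨t+1, by rw [Mach.run, ht]; exact hb.2⟩
  · rintro ⟨t, ht⟩
    induction t with
    | zero => simp [Mach.run] at ht
    | succ t ih =>
      cases h : m.run c t with
      | none => exact ih h
      | some b =>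
        rw [Mach.run, h] at ht
        exact ⟨b, mem_eval.2 ⟨reaches_of_run m c t b h, ht⟩⟩

/-- Restriction of a machine to a closed set of states. -/
def Mach.restrict {Q G} (m : Mach Q G) (T : Set Q) (hT : ∀ q ∈ T, ∀ g, ∀ p ∈ m q g, p.1 ∈ T) : Mach T G :=
  fun q g => (m q.1 g).pmap (fun p hp => (⟨p.1, hp⟩, p.2)) (fun p hp => hT q.1 q.2 g p hp)

theorem restrict_dom {Q G} (m : Mach Q G) (T : Set Q) (hT : ∀ q ∈ T, ∀ g, ∀ p ∈ m q g, p.1 ∈ T)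
    (q : T) (S : ℕ → G) : (eval m.step (q.1, S)).Dom ↔ (eval (m.restrict T hT).step (q, S)).Dom := by
  refine tr_eval_dom (tr := fun a b => ((a.1.1, a.2) : Q × (ℕ → G)) = b) ?_ rfl
  rw [fun_respects (tr := fun a : T × (ℕ → G) => ((a.1.1, a.2) : Q × (ℕ → G)))]
  rintro ⟨⟨q, hq⟩, S⟩
  have hr : (m.restrict T hT) ⟨q, hq⟩ (S 0) = (m q (S 0)).pmap (fun p hp => (⟨p.1, hp⟩, p.2)) (fun p hp => hT q hq (S 0) p hp) := rfl
  cases h : m q (S 0) with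
  | none =>
    have : (m.restrict T hT) ⟨q, hq⟩ (S 0) = none := by rw [hr, Option.pmap_eq_none_iff, h]
    simp [Mach.step, this, h, FRespects]
  | some p =>
    have hp : p.1 ∈ T := hT q hq (S 0) p h
    have : (m.restrict T hT) ⟨q, hq⟩ (S 0) = some (⟨p.1, hp⟩, p.2) := by
      rw [hr, Option.pmap_eq_some_iff]; exact ⟨p, hp, h, rfl⟩
    simp only [Mach.step, this, Option.map_some, FRespects]
    refine Relation.TransGen.single ?_
    simp [Mach.step, h]

open PartrecToTM2

abbrev GG := K' → Option Γ'
abbrev St := TM2.Stmt (fun _ : K' => Γ') Λ' (Option Γ')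
abbrev QM := Option St × Option Γ'

def uKeep : Option GG → GG → GG → GG := fun _ g _ => g
def uPush (k : K') (x : Γ') : Option GG → GG → GG → GG := fun l g _ k' =>
  if k' = k then (match l with | none => some x | some y => y k) else g k'
def uPop (k : K') : Option GG → GG → GG → GG := fun _ g r k' =>
  if k' = k then r k else g k'

def tmM : Mach QM GG
  | (none, _), _ => none
  | (some (TM2.Stmt.push k f q), v), _ => some ((some q, v), uPush k (f v))
  | (some (TM2.Stmt.peek k f q), v), g => some ((some q, f v (g k)), uKeep)
  | (some (TM2.Stmt.pop k f q), v), g => some ((some q, f v (g k)), uPop k)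
  | (some (TM2.Stmt.load a q), v), _ => some ((some q, a v), uKeep)
  | (some (TM2.Stmt.branch f q₁ q₂), v), _ => some ((some (cond (f v) q₁ q₂), v), uKeep)
  | (some (TM2.Stmt.goto l), v), _ => some ((some (PartrecToTM2.tr (l v)), v), uKeep)
  | (some TM2.Stmt.halt, v), _ => some ((none, v), uKeep)

def stk0 (S : K' → List Γ') : ℕ → GG := fun a k => (S k)[a]?

def alp (c : TM2.Cfg (fun _ : K' => Γ') Λ' (Option Γ')) : QM × (ℕ → GG) :=
  ((c.l.map PartrecToTM2.tr, c.var), stk0 c.stk)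

theorem keep_eq (S : ℕ → GG) : (fun a => uKeep (if a = 0 then none else some (S (a-1))) (S a) (S (a+1))) = S := rfl
theorem push_eq (S : K' → List Γ') (k : K') (x : Γ') :
   (fun a => uPush k x (if a = 0 then none else some (stk0 S (a-1))) (stk0 S a) (stk0 S (a+1)))
    = stk0 (Function.update S k (x :: S k)) := by
  funext a k'
  unfold uPush stk0
  by_cases h : k' = k
  · subst h
    cases a <;> simp
  · simp [h]
theorem pop_eq (S : K' → List Γ') (k : K') :
   (fun a => uPop k (if a = 0 then none else some (stk0 S (a-1))) (stk0 S a) (stk0 S (a+1)))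
    = stk0 (Function.update S k (S k).tail) := by
  funext a k'
  unfold uPop stk0
  by_cases h : k' = k
  · subst h
    simp
  · simp [h]

theorem tmM_reach (q : St) : ∀ (v : Option Γ') (S : K' → List Γ'),
    Reaches₁ tmM.step ((some q, v), stk0 S) (alp (TM2.stepAux q v S)) := by
  induction q with
  | push k f q ih =>
    intro v S
    refine Relation.TransGen.head (b := ((some q, v), stk0 (Function.update S k (f v :: S k)))) ?_ (ih v _)
    simp only [Mach.step, tmM, Option.map_some, Option.mem_def, push_eq]
  | peek k f q ih =>
    intro v S
    refine Relation.TransGen.head (b := ((some q, f v (S k).head?), stk0 S)) ?_ (ih _ _)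
    simp only [Mach.step, tmM, Option.map_some, Option.mem_def, keep_eq]
    simp [stk0, List.head?_eq_getElem?]
  | pop k f q ih =>
    intro v S
    refine Relation.TransGen.head (b := ((some q, f v (S k).head?), stk0 (Function.update S k (S k).tail))) ?_ (ih _ _)
    simp only [Mach.step, tmM, Option.map_some, Option.mem_def, pop_eq]
    simp [stk0, List.head?_eq_getElem?]
  | load a q ih =>
    intro v S
    refine Relation.TransGen.head (b := ((some q, a v), stk0 S)) ?_ (ih _ _)
    simp only [Mach.step, tmM, Option.map_some, Option.mem_def, keep_eq]
  | branch f q1 q2 ih1 ih2 =>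
    intro v S
    refine Relation.TransGen.head (b := ((some (cond (f v) q1 q2), v), stk0 S)) ?_ ?_
    · simp only [Mach.step, tmM, Option.map_some, Option.mem_def, keep_eq]
    · rw [TM2.stepAux]
      cases f v
      · exact ih2 _ _
      · exact ih1 _ _
  | goto l =>
    intro v S
    refine Relation.TransGen.single ?_
    simp only [Mach.step, tmM, Option.map_some, Option.mem_def, keep_eq]; rfl
  | halt =>
    intro v S
    refine Relation.TransGen.single ?_
    simp only [Mach.step, tmM, Option.map_some, Option.mem_def, keep_eq]; rfl

theorem tmM_dom (c : TM2.Cfg (fun _ : K' => Γ') Λ' (Option Γ')) :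
    (eval tmM.step (alp c)).Dom ↔ (eval (TM2.step PartrecToTM2.tr) c).Dom := by
  refine tr_eval_dom (tr := fun a b => alp a = b) ?_ rfl
  rw [fun_respects (tr := alp)]
  rintro ⟨l, v, S⟩
  cases l with
  | none => rfl
  | some l => exact tmM_reach (PartrecToTM2.tr l) v S

def TT (S : Finset Λ') : Set QM := {q | q.1 ∈ TM2.stmts PartrecToTM2.tr S}

theorem some_tr_mem {S : Finset Λ'} {l : Λ'} (h : l ∈ S) (q : St) (hq : q ∈ TM2.stmts₁ (PartrecToTM2.tr l)) :
    some q ∈ TM2.stmts PartrecToTM2.tr S := by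
  classical
  simp only [TM2.stmts, Finset.mem_insertNone, Finset.mem_biUnion, Option.mem_def, Option.some.injEq,
      forall_eq']
  exact ⟨l, h, hq⟩

theorem TT_closed (S : Finset Λ') (hS : ∀ q ∈ S, TM2.SupportsStmt S (PartrecToTM2.tr q)) :
    ∀ q ∈ TT S, ∀ g, ∀ p ∈ tmM q g, p.1 ∈ TT S := by
  classical
  rintro ⟨_ | q, v⟩ hq g p hp
  · simp [tmM] at hp
  have key : ∀ q', q' ∈ TM2.stmts₁ q → some q' ∈ TM2.stmts PartrecToTM2.tr S := fun q' h => TM2.stmts_trans h hq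
  have hsup : TM2.SupportsStmt S q := by
    unfold TT at hq
    simp only [TM2.stmts, Finset.mem_insertNone, Finset.mem_biUnion, Set.mem_setOf_eq, Option.mem_def, Option.some.injEq,
      forall_eq'] at hq
    obtain ⟨l, ls, h⟩ := hq
    exact TM2.stmts₁_supportsStmt_mono h (hS l ls)
  cases q with
  | push k f q | peek k f q | pop k f q | load f q =>
    simp only [tmM, Option.mem_def, Option.some.injEq] at hp
    subst hp
    exact key q (by simp [TM2.stmts₁, TM2.stmts₁_self])
  | branch f q1 q2 =>
    simp only [tmM, Option.mem_def, Option.some.injEq] at hp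
    subst hp
    show some (cond (f v) q1 q2) ∈ TM2.stmts PartrecToTM2.tr S
    cases f v <;> exact key _ (by simp [TM2.stmts₁, TM2.stmts₁_self])
  | goto l =>
    simp only [tmM, Option.mem_def, Option.some.injEq] at hp
    subst hp
    show some (PartrecToTM2.tr (l v)) ∈ TM2.stmts PartrecToTM2.tr S
    exact some_tr_mem (hsup v) _ TM2.stmts₁_self
  | halt =>
    simp only [tmM, Option.mem_def, Option.some.injEq] at hp
    subst hp
    show none ∈ TM2.stmts PartrecToTM2.tr S
    simp [TM2.stmts]

end Rice

namespace Rice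
open Turing StateTransition PartrecToTM2

instance : Finite K' := by
  refine Finite.of_injective (fun k : K' => match k with | .main => (0 : Fin 4) | .rev => 1 | .aux => 2 | .stack => 3) ?_
  intro a b h; cases a <;> cases b <;> simp_all

instance (S : Finset Λ') : Finite (TT S) := by
  have : TT S = (↑(TM2.stmts PartrecToTM2.tr S) : Set _) ×ˢ (Set.univ : Set (Option Γ')) := by
    ext ⟨a, b⟩; simp [TT]
  rw [this]
  exact Set.Finite.to_subtype ((Finset.finite_toSet _).prod Set.finite_univ)

theorem trPosNum_get (n : PosNum) : ∀ a : ℕ, (trPosNum n)[a]? =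
    if 2^a ≤ (n : ℕ) then some (if (n : ℕ) / 2^a % 2 = 1 then Γ'.bit1 else Γ'.bit0) else none := by
  induction n with
  | one => intro a; cases a with
    | zero => simp [trPosNum]
    | succ a =>
      have : ¬ 2^(a+1) ≤ 1 := by
        have : 0 < 2^a := by positivity
        rw [pow_succ]; omega
      simp [trPosNum]
  | bit0 n ih => intro a; cases a with
    | zero =>
      have : 1 ≤ (n : ℕ) := PosNum.cast_pos (α := ℕ) n
      rw [if_pos (by push_cast; omega)]
      simp [trPosNum]
      omega
    | succ a =>
      simp only [trPosNum, List.getElem?_cons_succ, ih a, PosNum.cast_bit0]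
      have e1 : 2^(a+1) ≤ (n : ℕ) + n ↔ 2^a ≤ (n:ℕ) := by rw [pow_succ]; omega
      have e2 : ((n : ℕ) + n) / 2^(a+1) = n / 2^a := by
        rw [pow_succ', ← Nat.div_div_eq_div_mul]; congr 1; omega
      simp only [e1, e2]
  | bit1 n ih => intro a; cases a with
    | zero =>
      rw [if_pos (by simp)]
      have : ((n:ℕ) + n + 1) % 2 = 1 := by omega
      simp [trPosNum, this]
    | succ a =>
      simp only [trPosNum, List.getElem?_cons_succ, ih a, PosNum.cast_bit1]
      have e1 : 2^(a+1) ≤ (n : ℕ) + n + 1 ↔ 2^a ≤ (n:ℕ) := by rw [pow_succ]; omega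
      have e2 : ((n : ℕ) + n + 1) / 2^(a+1) = n / 2^a := by
        rw [pow_succ', ← Nat.div_div_eq_div_mul]; congr 1; omega
      simp only [e1, e2]

theorem trNat_get (n a : ℕ) : (trNat n)[a]? =
    if 2^a ≤ n then some (if n / 2^a % 2 = 1 then Γ'.bit1 else Γ'.bit0) else none := by
  unfold trNat
  cases h : (n : Num) with
  | zero =>
    have : n = 0 := by
      have := congrArg (fun x : Num => (x : ℕ)) h
      simpa using this
    subst this
    simp [trNum]
  | pos p =>
    have : n = (p : ℕ) := by
      have := congrArg (fun x : Num => (x : ℕ)) h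
      simpa using this
    rw [trNum, trPosNum_get, this]

theorem trNat_len (n a : ℕ) : a < (trNat n).length ↔ 2^a ≤ n := by
  have := trNat_get n a
  by_cases h : a < (trNat n).length
  · rw [List.getElem?_eq_getElem h] at this
    split_ifs at this <;> simp_all
  · rw [List.getElem?_eq_none (by omega)] at this
    split_ifs at this with h2
    exact iff_of_false h h2

def inpF (x : Bool × Bool × Bool) : GG := fun k => if k = K'.main then
  (if x.1 = true then some (if x.2.1 = true then Γ'.bit1 else Γ'.bit0) else if x.2.2 = true then some Γ'.cons else none)
  else none

def inp (n a : ℕ) : GG := inpF (decide (2^a ≤ n), decide (n / 2^a % 2 = 1), decide (2^a ≤ 2 * n ∨ a = 0))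

theorem inp_eq (n : ℕ) : stk0 (K'.elim (trList [n]) [] [] []) = inp n := by
  funext a k
  unfold stk0 inp inpF
  have h2 : 2^a ≤ 2 * n ∨ a = 0 ↔ a ≤ (trNat n).length := by
    cases a with
    | zero => simp
    | succ a =>
      rw [← trNat_len n a |>.trans (by rw [pow_succ']; constructor <;> intro h <;> omega : _ ↔ 2^(a+1) ≤ 2 * n)]
      omega
  cases k with
  | main =>
    simp only [K'.elim_main, trList, decide_eq_true_eq, if_true, h2]
    rw [List.getElem?_append]
    simp only [trNat_len]
    by_cases h : 2^a ≤ n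
    · simp only [h, if_true]; rw [trNat_get]; simp [h]
    · simp only [h, if_false]
      have hl := mt (trNat_len n a).1 h
      split_ifs with h3
      · have : a - (trNat n).length = 0 := by omega
        rw [this]; rfl
      · rw [List.getElem?_eq_none]; simp; omega
  | rev => simp
  | aux => simp
  | stack => simp

theorem inp_cap (n a : ℕ) (h : n + 2 ≤ a) : inp n a = inp n (n+2) := by
  have key : ∀ a, n + 2 ≤ a → inp n a = fun _ => none := by
    intro a h
    have h1 : 2 * n < 2^a := calc 2 * n < 2 * 2^n := by have := Nat.lt_two_pow_self (n := n); omega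
      _ = 2^(n+1) := by rw [pow_succ']
      _ ≤ 2^a := Nat.pow_le_pow_right (by norm_num) (by omega)
    unfold inp inpF
    have h2 : ¬ 2^a ≤ n := by omega
    have h3 : ¬ (2^a ≤ 2*n ∨ a = 0) := by omega
    simp [h2, h3]
  rw [key a h, key _ le_rfl]

theorem primrec_pow2 : Primrec (fun a : ℕ => 2^a) := by
  have : Primrec₂ (fun (_ : ℕ) (p : ℕ × ℕ) => 2 * p.2) :=
    (Primrec.nat_mul.comp (Primrec.const 2) (Primrec.snd.comp Primrec.snd))
  refine (Primrec.nat_rec₁ (f := fun _ IH => 2 * IH) 1 (Primrec.nat_mul.comp (Primrec.const 2) Primrec.snd)).of_eq ?_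
  intro n
  induction n with
  | zero => rfl
  | succ n ih => rw [pow_succ']; simp only [ih]

theorem inp_primrec (γ : GG) : PrimrecPred (fun p : ℕ × ℕ => inp p.1 p.2 = γ) := by
  classical
  have h1 : PrimrecPred (fun p : ℕ × ℕ => 2^p.2 ≤ p.1) :=
    Primrec.nat_le.comp (primrec_pow2.comp Primrec.snd) Primrec.fst
  have h2 : PrimrecPred (fun p : ℕ × ℕ => p.1 / 2^p.2 % 2 = 1) :=
    Primrec.eq.comp (Primrec.nat_mod.comp (Primrec.nat_div.comp Primrec.fst (primrec_pow2.comp Primrec.snd)) (Primrec.const 2)) (Primrec.const 1)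
  have h3 : PrimrecPred (fun p : ℕ × ℕ => 2^p.2 ≤ 2 * p.1 ∨ p.2 = 0) :=
    (Primrec.nat_le.comp (primrec_pow2.comp Primrec.snd) (Primrec.nat_mul.comp (Primrec.const 2) Primrec.fst)).or
     (Primrec.eq.comp Primrec.snd (Primrec.const 0))
  have := (Primrec.dom_finite (fun x => decide (inpF x = γ))).comp
    ((primrecPred_iff_primrec_decide.1 h1).pair ((primrecPred_iff_primrec_decide.1 h2).pair (primrecPred_iff_primrec_decide.1 h3)))
  exact primrecPred_iff_primrec_decide.2 this

/-- A finite machine with an undecidable halting problem. -/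
theorem exists_machine : ∃ (Q G : Type) (_ : Finite Q) (_ : Finite G) (m : Mach Q G) (q0 : Q) (S0 : ℕ → ℕ → G),
    (∀ n a, n + 2 ≤ a → S0 n a = S0 n (n+2)) ∧ (∀ γ : G, PrimrecPred fun p : ℕ × ℕ => S0 p.1 p.2 = γ) ∧
    ¬ ComputablePred (fun n => ∃ t, m.run (q0, S0 n) t = none) := by
  classical
  let F : ℕ →. ℕ := fun n => (Nat.Partrec.Code.eval (Denumerable.ofNat Nat.Partrec.Code n) 0)
  have hF : Partrec F := Nat.Partrec.Code.eval_part.comp (Computable.ofNat _) (Computable.const 0)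
  obtain ⟨c, hc⟩ := ToPartrec.Code.exists_code (Nat.Partrec'.part_iff₁.2 hF)
  have hdom : ∀ n, (ToPartrec.Code.eval c [n]).Dom ↔ (F n).Dom := by
    intro n
    have := hc ⟨[n], rfl⟩
    rw [show (⟨[n], rfl⟩ : List.Vector ℕ 1).1 = [n] from rfl] at this
    rw [this]
    rfl
  let S := codeSupp c Cont'.halt
  have hS := (PartrecToTM2.tr_supports c Cont'.halt)
  have hS2 := TT_closed S hS.2
  let q0 : TT S := ⟨(some (PartrecToTM2.tr (trNormal c Cont'.halt)), none), by
    show some (PartrecToTM2.tr _) ∈ TM2.stmts PartrecToTM2.tr S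
    exact some_tr_mem hS.1 _ TM2.stmts₁_self⟩
  refine ⟨TT S, GG, inferInstance, inferInstance, tmM.restrict (TT S) hS2, q0, inp, inp_cap, inp_primrec, ?_⟩
  have key : ∀ n, (∃ t, (tmM.restrict (TT S) hS2).run (q0, inp n) t = none) ↔ (F n).Dom := by
    intro n
    rw [← dom_iff_run, ← restrict_dom, ← hdom, ← inp_eq]
    have h1 := tmM_dom (PartrecToTM2.init c [n])
    rw [PartrecToTM2.tr_eval] at h1
    exact h1
  simp only [key]
  intro h
  refine ComputablePred.halting_problem 0 ?_
  obtain ⟨hd, h⟩ := h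
  refine ⟨fun _ => Classical.dec _, ?_⟩
  refine (h.comp (Computable.encode (α := Nat.Partrec.Code))).of_eq fun d => ?_
  simp [F]

end Rice

namespace Rice

theorem primrecPred_finite_exists {ι α : Type} [Finite ι] [Primcodable α] {P : ι → α → Prop}
    (h : ∀ i, PrimrecPred (P i)) : PrimrecPred (fun x => ∃ i, P i x) := by
  classical
  have := Fintype.ofFinite ι
  have key : ∀ s : Finset ι, PrimrecPred (fun x => ∃ i ∈ s, P i x) := by
    intro s
    induction s using Finset.induction_on with
    | empty =>
      refine (PrimrecPred.and (Primrec.eq.comp (Primrec.const 0) (Primrec.const 1) : PrimrecPred fun _ : α => (0:ℕ) = 1)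
        (Primrec.eq.comp (Primrec.const 0) (Primrec.const 1) : PrimrecPred fun _ : α => (0:ℕ) = 1)).of_eq ?_
      intro x; simp
    | insert i s hi ih =>
      refine ((h i).or ih).of_eq ?_
      intro x; simp
  refine (key Finset.univ).of_eq ?_
  intro x; simp

theorem primrecPred_bool4 {α : Type} [Primcodable α] (Φ : Prop → Prop → Prop → Prop → Prop) {P1 P2 P3 P4 : α → Prop}
    (h1 : PrimrecPred P1) (h2 : PrimrecPred P2) (h3 : PrimrecPred P3) (h4 : PrimrecPred P4) :
    PrimrecPred (fun x => Φ (P1 x) (P2 x) (P3 x) (P4 x)) := by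
  classical
  have := (Primrec.dom_finite (fun x : Bool × Bool × Bool × Bool =>
      decide (Φ (x.1 = true) (x.2.1 = true) (x.2.2.1 = true) (x.2.2.2 = true)))).comp
    ((primrecPred_iff_primrec_decide.1 h1).pair ((primrecPred_iff_primrec_decide.1 h2).pair
      ((primrecPred_iff_primrec_decide.1 h3).pair (primrecPred_iff_primrec_decide.1 h4))))
  refine primrecPred_iff_primrec_decide.2 (this.of_eq fun x => ?_)
  simp

abbrev Fp (Q G : Type) := Sk × CF Q G × CF Q G

def okPhi {Q G} (q0 : Q) (f : Fp Q G) (γ : G) (P1 P2 : Prop) : Prop := cellOk f.1 ∧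
  (node f.1 → (f.2.1 = f.2.2 ∧ P1) ∧ (vb f.1 ↔ f.2.1.gl = none) ∧ (hb f.1 ↔ f.2.1.b = true) ∧ okF q0 f.2.1 P2 γ)
def hPhi {Q G} (f f' : Fp Q G) (P3 P4 : Prop) : Prop := HRs f.1 f'.1 ∧
  (node f'.1 → vb f'.1 ∨ CHF f.2.1 f'.2.1 P3) ∧ (¬ node f'.1 → f'.2.1 = f.2.1 ∧ P4)
def vPhi {Q G} (m : Mach Q G) (f f' : Fp Q G) (P1 : Prop) : Prop := HRs f.1.swap f'.1.swap ∧
  (node f'.1 → hb f'.1 ∨ CVF m f.2.2 f'.2.2) ∧ (¬ node f'.1 → f'.2.2 = f.2.2 ∧ P1)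

structure Tiling (B : ℕ) (HR VR : ℕ → ℕ → Prop) (c : ℤ → ℤ → ℕ) : Prop where
  lt : ∀ i j, c i j < B
  H : ∀ i j, HR (c i j) (c (i+1) j)
  V : ∀ i j, VR (c i j) (c i (j+1))

theorem exists_tiles : ∃ (B : ℕ → ℕ) (HR VR : ℕ → ℕ → ℕ → Prop), Primrec B ∧
    PrimrecPred (fun p : ℕ × ℕ × ℕ => HR p.1 p.2.1 p.2.2) ∧
    PrimrecPred (fun p : ℕ × ℕ × ℕ => VR p.1 p.2.1 p.2.2) ∧
    ¬ ComputablePred (fun n => ¬ ∃ c, Tiling (B n) (HR n) (VR n) c) := by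
  classical
  obtain ⟨Q, G, hQ, hG, m, q0, S0, hcap, hprim, hund⟩ := exists_machine
  obtain ⟨K, ⟨φ⟩⟩ := Finite.exists_equiv_fin (Fp Q G)
  have γ0 : G := S0 0 0
  have b0 : Half := ⟨0, true, true, true, true, true, true⟩
  have f0 : Fp Q G := ((b0, b0), ⟨q0, γ0, none, γ0, γ0, true⟩, ⟨q0, γ0, none, γ0, γ0, true⟩)
  have hK : 0 < K := lt_of_le_of_lt (Nat.zero_le _) (φ f0).2
  let fp : ℕ → Fp Q G := fun a => φ.symm ⟨a % K, Nat.mod_lt _ hK⟩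
  let l1 : ℕ → ℕ → ℕ := fun n a => a / K % (n+3)
  let l2 : ℕ → ℕ → ℕ := fun n a => a / K / (n+3) % (n+3)
  let δ : (n : ℕ) → ℕ → Cell (CF Q G × Fin (n+2+1)) := fun n a =>
    ((fp a).1, ((fp a).2.1, ⟨l1 n a, Nat.mod_lt _ (by omega)⟩), ((fp a).2.2, ⟨l2 n a, Nat.mod_lt _ (by omega)⟩))
  let HR : ℕ → ℕ → ℕ → Prop := fun n a b => okPhi q0 (fp a) (S0 n (l1 n a)) (l1 n a = l2 n a) (l1 n a = 0) ∧
    hPhi (fp a) (fp b) (l1 n b = min (l1 n a + 1) (n+2)) (l1 n b = l1 n a)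
  let VR : ℕ → ℕ → ℕ → Prop := fun n a b => vPhi m (fp a) (fp b) (l2 n b = l2 n a)
  have hok : ∀ n a, cellOkF (mSys m q0 (n+2) (S0 n)) (δ n a) ↔ okPhi q0 (fp a) (S0 n (l1 n a)) (l1 n a = l2 n a) (l1 n a = 0) := by
    intro n a
    simp only [cellOkF, okPhi, mSys, δ, Prod.mk.injEq, Fin.mk.injEq]
  have hH : ∀ n a b, HF (mSys m q0 (n+2) (S0 n)) (δ n a) (δ n b) ↔ hPhi (fp a) (fp b) (l1 n b = min (l1 n a + 1) (n+2)) (l1 n b = l1 n a) := by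
    intro n a b
    simp only [HF, hPhi, mSys, δ, Prod.mk.injEq, Fin.mk.injEq]
  have hV : ∀ n a b, VF (mSys m q0 (n+2) (S0 n)) (δ n a) (δ n b) ↔ vPhi m (fp a) (fp b) (l2 n b = l2 n a) := by
    intro n a b
    simp only [VF, vPhi, mSys, δ, Prod.mk.injEq, Fin.mk.injEq]
  have hsurj : ∀ n, ∀ x, ∃ a, a < K * ((n+3) * (n+3)) ∧ δ n a = x := by
    rintro n ⟨s, ⟨c1, x1, hx1⟩, ⟨c2, x2, hx2⟩⟩
    let k := (φ (s, c1, c2)).1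
    have hk : k < K := (φ (s, c1, c2)).2
    have hx1 : x1 < n + 3 := hx1
    have hx2 : x2 < n + 3 := hx2
    have e1 : (k + K * (x1 + (n+3) * x2)) % K = k := by rw [Nat.add_mul_mod_self_left, Nat.mod_eq_of_lt hk]
    have e2 : (k + K * (x1 + (n+3) * x2)) / K = x1 + (n+3) * x2 := by
      rw [Nat.add_mul_div_left _ _ hK, Nat.div_eq_of_lt hk, zero_add]
    have e3 : (x1 + (n+3) * x2) % (n+3) = x1 := by rw [Nat.add_mul_mod_self_left, Nat.mod_eq_of_lt hx1]
    have e4 : (x1 + (n+3) * x2) / (n+3) % (n+3) = x2 := by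
      rw [Nat.add_mul_div_left _ _ (by omega), Nat.div_eq_of_lt hx1, zero_add, Nat.mod_eq_of_lt hx2]
    refine ⟨k + K * (x1 + (n+3) * x2), ?_, ?_⟩
    · have h1 : x1 + (n+3) * x2 + 1 ≤ (n+3) * (n+3) := by nlinarith
      have h2 : K * (x1 + (n+3) * x2 + 1) ≤ K * ((n+3) * (n+3)) := Nat.mul_le_mul_left _ h1
      rw [mul_add, mul_one] at h2
      omega
    · have : fp (k + K * (x1 + (n+3) * x2)) = (s, c1, c2) := by
        simp only [fp, e1]
        rw [Equiv.symm_apply_eq]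
      simp only [δ, this, l1, l2, e2, e3, e4]
  have hfp : ∀ a f, fp a = f ↔ a % K = (φ f).1 := by
    intro a f
    simp only [fp, Equiv.symm_apply_eq, Fin.ext_iff]
  have pn : Primrec (fun p : ℕ × ℕ × ℕ => p.1) := Primrec.fst
  have pa : Primrec (fun p : ℕ × ℕ × ℕ => p.2.1) := Primrec.fst.comp Primrec.snd
  have pb : Primrec (fun p : ℕ × ℕ × ℕ => p.2.2) := Primrec.snd.comp Primrec.snd
  have pn3 : Primrec (fun p : ℕ × ℕ × ℕ => p.1 + 3) := Primrec.nat_add.comp pn (Primrec.const 3)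
  have pn2 : Primrec (fun p : ℕ × ℕ × ℕ => p.1 + 2) := Primrec.nat_add.comp pn (Primrec.const 2)
  have q1 : ∀ {g : ℕ × ℕ × ℕ → ℕ}, Primrec g → Primrec (fun p => l1 p.1 (g p)) := fun hg =>
    Primrec.nat_mod.comp (Primrec.nat_div.comp hg (Primrec.const K)) pn3
  have q2 : ∀ {g : ℕ × ℕ × ℕ → ℕ}, Primrec g → Primrec (fun p => l2 p.1 (g p)) := fun hg =>
    Primrec.nat_mod.comp (Primrec.nat_div.comp (Primrec.nat_div.comp hg (Primrec.const K)) pn3) pn3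
  have qf : ∀ {g : ℕ × ℕ × ℕ → ℕ}, Primrec g → ∀ f, PrimrecPred (fun p => fp (g p) = f) := fun hg f =>
    (Primrec.eq.comp (Primrec.nat_mod.comp hg (Primrec.const K)) (Primrec.const (φ f).1)).of_eq fun p => (hfp _ _).symm
  refine ⟨fun n => K * ((n+3) * (n+3)), HR, VR, ?_, ?_, ?_, ?_⟩
  · have h3 : Primrec (fun n : ℕ => n + 3) := Primrec.nat_add.comp Primrec.id (Primrec.const 3)
    exact Primrec.nat_mul.comp (Primrec.const K) (Primrec.nat_mul.comp h3 h3)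
  · have : PrimrecPred (fun p : ℕ × ℕ × ℕ => ∃ f : Fp Q G, ∃ f' : Fp Q G, ∃ γ : G,
        (fp p.2.1 = f ∧ fp p.2.2 = f' ∧ S0 p.1 (l1 p.1 p.2.1) = γ) ∧
        (okPhi q0 f γ (l1 p.1 p.2.1 = l2 p.1 p.2.1) (l1 p.1 p.2.1 = 0) ∧
          hPhi f f' (l1 p.1 p.2.2 = min (l1 p.1 p.2.1 + 1) (p.1+2)) (l1 p.1 p.2.2 = l1 p.1 p.2.1))) := by
      refine primrecPred_finite_exists fun f => primrecPred_finite_exists fun f' => primrecPred_finite_exists fun γ => ?_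
      refine ((qf pa f).and ((qf pb f').and ((hprim γ).comp (pn.pair (q1 pa))))).and ?_
      exact primrecPred_bool4 (fun P1 P2 P3 P4 => okPhi q0 f γ P1 P2 ∧ hPhi f f' P3 P4)
        (Primrec.eq.comp (q1 pa) (q2 pa)) (Primrec.eq.comp (q1 pa) (Primrec.const 0))
        (Primrec.eq.comp (q1 pb) (Primrec.nat_min.comp (Primrec.nat_add.comp (q1 pa) (Primrec.const 1)) pn2))
        (Primrec.eq.comp (q1 pb) (q1 pa))
    refine this.of_eq fun p => ?_
    constructor
    · rintro ⟨_, _, _, ⟨rfl, rfl, rfl⟩, h⟩; exact h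
    · intro h; exact ⟨_, _, _, ⟨rfl, rfl, rfl⟩, h⟩
  · have : PrimrecPred (fun p : ℕ × ℕ × ℕ => ∃ f : Fp Q G, ∃ f' : Fp Q G,
        (fp p.2.1 = f ∧ fp p.2.2 = f') ∧ vPhi m f f' (l2 p.1 p.2.2 = l2 p.1 p.2.1)) := by
      refine primrecPred_finite_exists fun f => primrecPred_finite_exists fun f' => ?_
      refine ((qf pa f).and (qf pb f')).and ?_
      have h1 : PrimrecPred (fun p : ℕ × ℕ × ℕ => l2 p.1 p.2.2 = l2 p.1 p.2.1) := Primrec.eq.comp (q2 pb) (q2 pa)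
      exact primrecPred_bool4 (fun P1 _ _ _ => vPhi m f f' P1) h1 h1 h1 h1
    refine this.of_eq fun p => ?_
    constructor
    · rintro ⟨_, _, ⟨rfl, rfl⟩, h⟩; exact h
    · intro h; exact ⟨_, _, ⟨rfl, rfl⟩, h⟩
  · intro h
    apply hund
    refine h.of_eq fun n => ?_
    have key := tiling_iff_run m q0 (n+2) (S0 n) (hcap n)
    rw [← not_iff_not, not_not]
    have : (∃ c, Tiling (K * ((n+3)*(n+3))) (HR n) (VR n) c) ↔ ∃ c, FullTiling (mSys m q0 (n+2) (S0 n)) c := by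
      constructor
      · rintro ⟨c, hc⟩
        exact ⟨fun i j => δ n (c i j), fun i j => (hok _ _).2 (hc.H i j).1, fun i j => (hH _ _ _).2 (hc.H i j).2,
          fun i j => (hV _ _ _).2 (hc.V i j)⟩
      · rintro ⟨c, hc⟩
        choose d hd using hsurj n
        refine ⟨fun i j => d (c i j), fun i j => (hd _).1, fun i j => ⟨?_, ?_⟩, fun i j => ?_⟩
        · rw [← hok, (hd _).2]; exact hc.ok i j
        · rw [← hH, (hd _).2, (hd _).2]; exact hc.H i j
        · show vPhi _ _ _ _
          rw [← hV, (hd _).2, (hd _).2]; exact hc.V i j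
    rw [this, key]
    push Not
    rfl

end Rice

namespace Rice

structure Par where
  rad : ℕ
  f : (Fin (2 * rad + 1) → Bool) → Bool
  U : ℕ
  u : ℕ → Bool
  B : ℕ
  HR : ℕ → ℕ → Prop
  VR : ℕ → ℕ → Prop

def Par.M (P : Par) : ℕ := P.U + P.B + P.rad + 1
def Par.N (P : Par) : ℕ := P.M + P.U + 2 + P.B
def Par.cw (P : Par) (a k : ℕ) : Bool :=
  if k < P.M then true else if k = P.M then false else if k < P.M + 1 + P.U then P.u (k - P.M - 1)
  else if k = P.M + 1 + P.U then false else decide (k - (P.M + P.U + 2) < a)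

def Par.isC (P : Par) (W : ℕ → ℕ → Bool) (i p a : ℕ) : Prop := ∀ k < P.N, W i (p + k) = P.cw a k
def Par.pH (P : Par) (W : ℕ → ℕ → Bool) (i p : ℕ) : Prop :=
  ∃ a < P.B, ∃ b < P.B, P.isC W i p a ∧ P.isC W i (p + P.N) b ∧ P.HR a b
def Par.pV (P : Par) (W : ℕ → ℕ → Bool) (p : ℕ) : Prop :=
  ∃ a < P.B, ∃ b < P.B, P.isC W 0 p a ∧ P.isC W 1 p b ∧ P.VR a b
def Par.good (P : Par) (W : ℕ → ℕ → Bool) : Prop :=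
  P.f (fun j => W 1 (3 * P.N - 1 - P.rad + j)) = W 2 (3 * P.N - 1)
def Par.coded (P : Par) (W : ℕ → ℕ → Bool) : Prop :=
  ∃ o < P.N, (∀ k < 4, P.pH W 0 (o + k * P.N) ∧ P.pH W 1 (o + k * P.N)) ∧ ∀ k < 5, P.pV W (o + k * P.N)
def Par.Ok (P : Par) (W : ℕ → ℕ → Bool) : Prop := P.good W ∨ P.coded W

def win (x : ℤ → ℤ → Bool) (r c : ℤ) : ℕ → ℕ → Bool := fun i j => x (r + i) (c + j)

theorem Par.isC_congr (P : Par) {W W' : ℕ → ℕ → Bool} (h : ∀ i j, i < 3 → j < 6 * P.N → W i j = W' i j)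
    (i p a : ℕ) (hi : i < 3) (hp : p + P.N ≤ 6 * P.N) : P.isC W i p a ↔ P.isC W' i p a := by
  unfold Par.isC
  refine forall₂_congr fun k hk => ?_
  rw [h i (p+k) hi (by omega)]

theorem Par.Ok_congr (P : Par) {W W' : ℕ → ℕ → Bool} (h : ∀ i j, i < 3 → j < 6 * P.N → W i j = W' i j)
    : P.Ok W ↔ P.Ok W' := by
  have hN : P.rad < P.N := by unfold Par.N Par.M; omega
  unfold Par.Ok
  refine or_congr ?_ ?_
  · unfold Par.good
    rw [h 2 _ (by omega) (by omega)]
    have : (fun j : Fin (2 * P.rad + 1) => W 1 (3 * P.N - 1 - P.rad + j)) = fun j : Fin (2 * P.rad + 1) => W' 1 (3 * P.N - 1 - P.rad + j) := by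
      funext j
      have := j.2
      exact h 1 _ (by omega) (by omega)
    rw [this]
  · unfold Par.coded
    refine exists_congr fun o => and_congr_right fun ho => and_congr ?_ ?_
    · refine forall₂_congr fun k hk => ?_
      have hk' : k * P.N ≤ 3 * P.N := Nat.mul_le_mul_right _ (by omega)
      unfold Par.pH
      simp only [P.isC_congr h 0 (o + k * P.N) _ (by omega) (by omega), P.isC_congr h 0 (o + k * P.N + P.N) _ (by omega) (by omega),
        P.isC_congr h 1 (o + k * P.N) _ (by omega) (by omega), P.isC_congr h 1 (o + k * P.N + P.N) _ (by omega) (by omega)]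
    · refine forall₂_congr fun k hk => ?_
      have hk' : k * P.N ≤ 4 * P.N := Nat.mul_le_mul_right _ (by omega)
      unfold Par.pV
      simp only [P.isC_congr h 0 (o + k * P.N) _ (by omega) (by omega),
        P.isC_congr h 1 (o + k * P.N) _ (by omega) (by omega)]

/-- Coded block in a plane configuration. -/
def Par.zC (P : Par) (x : ℤ → ℤ → Bool) (r p : ℤ) (a : ℕ) : Prop := ∀ k : ℕ, k < P.N → x r (p + k) = P.cw a k

theorem Par.isC_win (P : Par) (x) (r c : ℤ) (i p a : ℕ) : P.isC (win x r c) i p a ↔ P.zC x (r+i) (c+p) a := by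
  unfold Par.isC Par.zC win
  refine forall₂_congr fun k hk => ?_
  push_cast
  rw [add_assoc]

theorem Par.zC_align (P : Par) (x) (r p q : ℤ) (a b : ℕ) (hb : b < P.B) (h : P.zC x r p a) (h' : P.zC x r q b)
    (h1 : q ≤ p) (h2 : p < q + P.N) : p = q := by
  obtain ⟨d, rfl⟩ := Int.le.dest h1
  have hN : P.N = P.M + P.U + 2 + P.B := rfl
  have hM : P.M = P.U + P.B + P.rad + 1 := rfl
  have hd : d < P.N := by omega
  by_contra hne
  have hd0 : 0 < d := by
    rcases Nat.eq_zero_or_pos d with h | h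
    · subst h; simp at hne
    · exact h
  by_cases hdM : d ≤ P.M
  · have e1 := h (P.M - d) (by omega)
    have e2 := h' P.M (by omega)
    rw [show q + (d:ℤ) + ((P.M - d : ℕ) : ℤ) = q + (P.M : ℤ) by omega, e2] at e1
    unfold Par.cw at e1
    rw [if_neg (by omega), if_pos rfl, if_pos (by omega)] at e1
    simp at e1
  · have e1 := h (P.N - 1 - d) (by omega)
    have e2 := h' (P.N - 1) (by omega)
    rw [show q + (d:ℤ) + ((P.N - 1 - d : ℕ) : ℤ) = q + ((P.N - 1 : ℕ) : ℤ) by omega, e2] at e1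
    unfold Par.cw at e1
    rw [if_neg (by omega), if_neg (by omega), if_neg (by omega), if_neg (by omega), if_pos (by omega)] at e1
    simp at e1
    omega

theorem Par.zC_inj (P : Par) (x) (r p : ℤ) (a b : ℕ) (ha : a < P.B) (hb : b < P.B) (h : P.zC x r p a)
    (h' : P.zC x r p b) : a = b := by
  have hN : P.N = P.M + P.U + 2 + P.B := rfl
  have key : ∀ t, t < P.B → (t < a ↔ t < b) := by
    intro t ht
    have e1 := h (P.M + P.U + 2 + t) (by omega)
    have e2 := h' (P.M + P.U + 2 + t) (by omega)
    rw [e2] at e1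
    unfold Par.cw at e1
    rw [if_neg (by omega), if_neg (by omega), if_neg (by omega), if_neg (by omega), if_neg (by omega), if_neg (by omega), if_neg (by omega), if_neg (by omega)] at e1
    rw [show P.M + P.U + 2 + t - (P.M + P.U + 2) = t by omega] at e1
    have := decide_eq_decide.1 e1
    exact this.symm
  have h1 := key a ha
  have h2 := key b hb
  omega

def Par.F (P : Par) : (ℤ → Bool) → (ℤ → Bool) := fun x i => P.f fun j => x (i - (P.rad : ℤ) + ((j : ℕ) : ℤ))

def Par.GoE (P : Par) : Prop := ∀ (x : ℤ → Bool) (p : ℤ), ¬ ∀ k : ℕ, k < P.U → P.F x (p + k) = P.u k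

theorem Par.good_win (P : Par) (x : ℤ → ℤ → Bool) (r c : ℤ) :
    P.good (win x r c) ↔ P.F (x (r+1)) (c + 3 * P.N - 1) = x (r+2) (c + 3 * P.N - 1) := by
  have hN : P.rad < P.N := by unfold Par.N Par.M; omega
  unfold Par.good Par.F win
  have : (fun j : Fin (2 * P.rad + 1) => x (r + (1:ℕ)) (c + ((3 * P.N - 1 - P.rad + j : ℕ) : ℤ))) =
      fun j : Fin (2 * P.rad + 1) => x (r + 1) (c + 3 * P.N - 1 - P.rad + j) := by
    funext j; congr 1; omega
  rw [this]
  rw [show c + ((3 * P.N - 1 : ℕ) : ℤ) = c + 3 * P.N - 1 by omega]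
  rfl

def Par.zH (P : Par) (x : ℤ → ℤ → Bool) (r p : ℤ) : Prop :=
  ∃ a < P.B, ∃ b < P.B, P.zC x r p a ∧ P.zC x r (p + P.N) b ∧ P.HR a b
def Par.zV (P : Par) (x : ℤ → ℤ → Bool) (r p : ℤ) : Prop :=
  ∃ a < P.B, ∃ b < P.B, P.zC x r p a ∧ P.zC x (r+1) p b ∧ P.VR a b

theorem Par.pH_win (P : Par) (x) (r c : ℤ) (i p : ℕ) : P.pH (win x r c) i p ↔ P.zH x (r+i) (c+p) := by
  unfold Par.pH Par.zH
  simp only [P.isC_win, Nat.cast_add, add_assoc]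
theorem Par.pV_win (P : Par) (x) (r c : ℤ) (p : ℕ) : P.pV (win x r c) p ↔ P.zV x r (c+p) := by
  unfold Par.pV Par.zV
  simp only [P.isC_win, Nat.cast_zero, Nat.cast_one, add_zero]

/-- A bad cell forces a coded window. -/
theorem Par.bad (P : Par) (x) (hx : ∀ r c, P.Ok (win x r c)) (r c : ℤ) (hb : P.F (x (r-1)) c ≠ x r c) :
    ∃ o : ℤ, o + 2 * P.N ≤ c ∧ c < o + 4 * P.N ∧
     (∀ k : ℕ, k < 4 → P.zH x (r-2) (o + k * P.N) ∧ P.zH x (r-1) (o + k * P.N)) ∧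
      ∀ k : ℕ, k < 5 → P.zV x (r-2) (o + k * P.N) := by
  rcases hx (r-2) (c - 3 * P.N + 1) with h | h
  · rw [P.good_win] at h
    rw [show r - 2 + 1 = r - 1 by ring, show r - 2 + 2 = r by ring, show c - 3 * P.N + 1 + 3 * P.N - 1 = c by ring] at h
    exact absurd h hb
  · obtain ⟨o, ho, h1, h2⟩ := h
    refine ⟨c - 3 * P.N + 1 + o, by omega, by omega, fun k hk => ?_, fun k hk => ?_⟩
    · have := h1 k hk
      rw [P.pH_win, P.pH_win] at this
      push_cast at this
      rw [add_zero, show r - 2 + 1 = r - 1 by ring, ← add_assoc] at this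
      exact this
    · have := h2 k hk
      rw [P.pV_win] at this
      push_cast at this
      rw [← add_assoc] at this
      exact this

def Par.Inv (P : Par) (x : ℤ → ℤ → Bool) (r q : ℤ) : Prop :=
  (∃ a < P.B, P.zC x r q a) ∧ ∃ a < P.B, P.zC x (r-1) q a

theorem Par.inv_step (P : Par) (hG : P.GoE) (x) (hx : ∀ r c, P.Ok (win x r c)) (r q : ℤ) (h : P.Inv x r q) :
    P.Inv x (r-1) (q - P.N) ∧ P.Inv x (r-1) q ∧ P.Inv x (r-1) (q + P.N) ∧ P.zH x (r-1) q ∧ P.zV x (r-2) q := by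
  obtain ⟨⟨a, ha, h1⟩, b, hb, h2⟩ := h
  have hN : P.N = P.M + P.U + 2 + P.B := rfl
  have hM : P.M = P.U + P.B + P.rad + 1 := rfl
  have := hG (x (r-1)) (q + P.M + 1)
  push Not at this
  obtain ⟨k, hk, hne⟩ := this
  have e1 := h1 (P.M + 1 + k) (by omega)
  unfold Par.cw at e1
  rw [if_neg (by omega), if_neg (by omega), if_pos (by omega), show P.M + 1 + k - P.M - 1 = k by omega] at e1
  push_cast at e1
  rw [← e1, show q + ((P.M:ℤ) + 1 + k) = q + P.M + 1 + k by ring] at hne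
  obtain ⟨o, o1, o2, oH, oV⟩ := P.bad x hx r _ hne
  have hal : ∀ k : ℕ, k < 5 → q ≤ o + k * P.N → o + k * P.N < q + P.N → o + k * P.N = q := by
    intro k hk i1 i2
    obtain ⟨a', -, b', -, -, c1, -⟩ := oV k hk
    rw [show r - 2 + 1 = r - 1 by ring] at c1
    exact P.zC_align x (r-1) _ q b' b hb c1 h2 i1 i2
  have fin : ∀ j : ℕ, (j = 2 ∨ j = 3) → o + j * P.N = q → P.Inv x (r-1) (q - P.N) ∧ P.Inv x (r-1) q ∧ P.Inv x (r-1) (q + P.N) ∧ P.zH x (r-1) q ∧ P.zV x (r-2) q := by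
    intro j hj e
    have inv : ∀ k : ℕ, k < 5 → P.Inv x (r-1) (o + k * P.N) := by
      intro k hk
      obtain ⟨a', ha', b', hb', c0, c1, -⟩ := oV k hk
      rw [show r - 2 + 1 = r - 1 by ring] at c1
      exact ⟨⟨b', hb', c1⟩, ⟨a', ha', by rw [show r - 1 - 1 = r - 2 by ring]; exact c0⟩⟩
    refine ⟨?_, ?_, ?_, ?_, ?_⟩
    · have := inv (j-1) (by omega)
      rw [show q - (P.N : ℤ) = o + ((j-1:ℕ):ℤ) * P.N by rw [← e, Nat.cast_sub (by omega)]; push_cast; ring]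
      exact this
    · rw [← e]; exact inv j (by omega)
    · have := inv (j+1) (by omega)
      rw [show q + (P.N : ℤ) = o + ((j+1:ℕ):ℤ) * P.N by rw [← e]; push_cast; ring]
      exact this
    · rw [← e]; exact (oH j (by omega)).2
    · rw [← e]; exact oV j (by omega)
  by_cases hq : q ≤ o + 2 * P.N
  · exact fin 2 (Or.inl rfl) (hal 2 (by omega) (by push_cast; omega) (by push_cast; omega))
  · by_cases hq : q ≤ o + 3 * P.N
    · exact fin 3 (Or.inr rfl) (hal 3 (by omega) (by push_cast; omega) (by push_cast; omega))
    · have := hal 4 (by omega) (by push_cast; omega) (by push_cast; omega)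
      push_cast at this
      omega

end Rice

namespace Rice

theorem Par.inv_iter (P : Par) (hG : P.GoE) (x) (hx : ∀ r c, P.Ok (win x r c)) (r q : ℤ) (h : P.Inv x r q) (s : ℕ) :
    ∀ k : ℤ, k.natAbs ≤ s → P.Inv x (r - s) (q + k * P.N) := by
  induction s with
  | zero => intro k hk; obtain rfl : k = 0 := by omega
            simpa using h
  | succ s ih =>
    intro k hk
    have e : r - ((s+1:ℕ):ℤ) = r - s - 1 := by push_cast; ring
    rw [e]
    by_cases h1 : k.natAbs ≤ s
    · exact (P.inv_step hG x hx _ _ (ih k h1)).2.1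
    · by_cases h2 : 0 < k
      · have := (P.inv_step hG x hx _ _ (ih (k-1) (by omega))).2.2.1
        rwa [show q + (k-1) * P.N + P.N = q + k * (P.N:ℤ) by ring] at this
      · have := (P.inv_step hG x hx _ _ (ih (k+1) (by omega))).1
        rwa [show q + (k+1) * P.N - P.N = q + k * (P.N:ℤ) by ring] at this

open Filter in
theorem Par.tiling_of_inv (P : Par) (hG : P.GoE) (x) (hx : ∀ r c, P.Ok (win x r c)) (r q : ℤ) (h : P.Inv x r q) :
    ∃ c, Tiling P.B P.HR P.VR c := by
  have hH : ∀ (s : ℕ) (k : ℤ), k.natAbs ≤ s → P.zH x (r-s-1) (q + k * P.N) := fun s k hk =>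
    (P.inv_step hG x hx _ _ (P.inv_iter hG x hx r q h s k hk)).2.2.2.1
  have hV : ∀ (s : ℕ) (k : ℤ), k.natAbs ≤ s → P.zV x (r-s-2) (q + k * P.N) := fun s k hk =>
    (P.inv_step hG x hx _ _ (P.inv_iter hG x hx r q h s k hk)).2.2.2.2
  have hB : 0 < P.B := by
    obtain ⟨⟨a, ha, -⟩, -⟩ := h; omega
  classical
  let g : ℕ → ℤ × ℤ → Fin P.B := fun n p =>
    if h : ∃ a, a < P.B ∧ P.zC x (r - (2*n+5) + p.2) (q + p.1 * P.N) a then ⟨h.choose, h.choose_spec.1⟩ else ⟨0, hB⟩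
  have hg : ∀ (n : ℕ) (p : ℤ × ℤ) (a : ℕ), a < P.B → P.zC x (r - (2*n+5) + p.2) (q + p.1 * P.N) a → (g n p : ℕ) = a := by
    intro n p a ha hz
    have hex : ∃ a, a < P.B ∧ P.zC x (r - (2*n+5) + p.2) (q + p.1 * P.N) a := ⟨a, ha, hz⟩
    simp only [g, dif_pos hex]
    exact P.zC_inj _ _ _ _ _ hex.choose_spec.1 ha hex.choose_spec.2 hz
  obtain ⟨y, hy⟩ := compact g
  refine ⟨fun i j => y (i, j), fun i j => (y (i,j)).2, fun i j => ?_, fun i j => ?_⟩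
  · obtain ⟨n, h1, h2, h3⟩ := ((hy (i,j)).and ((hy (i+1,j)).and (hyper_ge (i.natAbs + j.natAbs + 2)))).exists
    have := hH (2*n+4-j).toNat i (by omega)
    rw [show r - ((2*n+4-j).toNat : ℤ) - 1 = r - (2*n+5) + j by omega] at this
    obtain ⟨a, ha, b, hb, c1, c2, c3⟩ := this
    have e1 := hg n (i,j) a ha c1
    have e2 := hg n (i+1,j) b hb (by convert c2 using 1; ring)
    rw [← h1, ← h2, e1, e2]
    exact c3
  · obtain ⟨n, h1, h2, h3⟩ := ((hy (i,j)).and ((hy (i,j+1)).and (hyper_ge (i.natAbs + j.natAbs + 2)))).exists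
    have := hV (2*n+3-j).toNat i (by omega)
    rw [show r - ((2*n+3-j).toNat : ℤ) - 2 = r - (2*n+5) + j by omega] at this
    obtain ⟨a, ha, b, hb, c1, c2, c3⟩ := this
    have e1 := hg n (i,j) a ha c1
    have e2 := hg n (i,j+1) b hb (by convert c2 using 1; ring)
    rw [← h1, ← h2, e1, e2]
    exact c3

theorem Par.orbit_of_noTiling (P : Par) (hG : P.GoE) (hT : ¬ ∃ c, Tiling P.B P.HR P.VR c) (x)
    (hx : ∀ r c, P.Ok (win x r c)) (r : ℤ) : x (r+1) = P.F (x r) := by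
  by_contra hne
  obtain ⟨c, hc⟩ := Function.ne_iff.1 hne
  obtain ⟨o, -, -, -, hV⟩ := P.bad x hx (r+1) c (by rw [show r + 1 - 1 = r by ring]; exact fun h => hc h.symm)
  obtain ⟨a, ha, b, hb, c1, c2, -⟩ := hV 2 (by omega)
  exact hT (P.tiling_of_inv hG x hx (r+1-2+1) _ ⟨⟨b, hb, c2⟩, a, ha, by rw [show r + 1 - 2 + 1 - 1 = r + 1 - 2 by ring]; exact c1⟩)

theorem Par.full_of_tiling (P : Par) (c) (hc : Tiling P.B P.HR P.VR c) (y : ℤ → Bool) :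
    ∃ x : ℤ → ℤ → Bool, (∀ r c, P.Ok (win x r c)) ∧ x 0 = y := by
  have hN0 : 0 < P.N := by unfold Par.N; omega
  have hNz : (0:ℤ) < P.N := by exact_mod_cast hN0
  let x : ℤ → ℤ → Bool := fun r => if r < 0 then fun p => P.cw (c (p / P.N) r) (p % P.N).toNat else P.F^[r.toNat] y
  have hz : ∀ r, r < 0 → ∀ i : ℤ, P.zC x r (i * P.N) (c i r) := by
    intro r hr i k hk
    simp only [x, if_pos hr]
    have e1 : (i * P.N + k) / (P.N:ℤ) = i := by
      rw [add_comm, Int.add_mul_ediv_right _ _ hNz.ne', Int.ediv_eq_zero_of_lt (by omega) (by omega), zero_add]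
    have e2 : (i * P.N + k) % (P.N:ℤ) = k := by
      rw [add_comm, Int.add_mul_emod_self_right, Int.emod_eq_of_lt (by omega) (by omega)]
    rw [e1, e2, Int.toNat_natCast]
  refine ⟨x, fun r p => ?_, ?_⟩
  · by_cases hr : r + 1 < 0
    · right
      have hp := Int.emod_add_mul_ediv (-p) P.N
      have hp0 := Int.emod_nonneg (-p) hNz.ne'
      have hp1 := Int.emod_lt_of_pos (-p) hNz
      set i0 : ℤ := -((-p) / P.N) with hi0
      have key : ∀ k : ℕ, p + (((-p % P.N).toNat + k * P.N : ℕ) : ℤ) = (i0 + k) * P.N := by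
        intro k; push_cast; rw [Int.toNat_of_nonneg hp0, hi0]; linarith
      have zH : ∀ r < 0, ∀ i : ℤ, P.zH x r (i * P.N) := fun r hr i =>
        ⟨_, hc.lt i r, _, hc.lt (i+1) r, hz r hr i, by have := hz r hr (i+1); rwa [add_mul, one_mul] at this, hc.H i r⟩
      refine ⟨(-p % P.N).toNat, by omega, fun k hk => ⟨?_, ?_⟩, fun k hk => ?_⟩
      · rw [P.pH_win, key]; exact zH _ (by push_cast; omega) _
      · rw [P.pH_win, key]; exact zH _ (by push_cast; omega) _
      · rw [P.pV_win, key]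
        exact ⟨_, hc.lt _ r, _, hc.lt _ (r+1), hz r (by omega) _, hz (r+1) hr _, hc.V _ r⟩
    · left
      rw [P.good_win]
      have : x (r+2) = P.F (x (r+1)) := by
        simp only [x]
        rw [if_neg (by omega), if_neg (by omega), ← Function.iterate_succ_apply' P.F]
        congr 2; omega
      rw [this]
  · simp [x]

open Filter in
theorem exists_GoE (rad : ℕ) (f : (Fin (2 * rad + 1) → Bool) → Bool)
    (hs : ¬ Function.Surjective (fun (x : ℤ → Bool) (i : ℤ) => f fun j => x (i - (rad : ℤ) + ((j : ℕ) : ℤ)))) :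
    ∃ (U : ℕ) (u : ℕ → Bool), ∀ B HR VR, (Par.mk rad f U u B HR VR).GoE := by
  by_contra hcon
  push Not at hcon
  apply hs
  intro y
  have : ∀ n : ℕ, ∃ x : ℤ → Bool, ∀ i : ℤ, i.natAbs ≤ n → (f fun j => x (i - (rad : ℤ) + ((j : ℕ) : ℤ))) = y i := by
    intro n
    obtain ⟨B, HR, VR, h⟩ := hcon (2*n+1) (fun k => y (k - n))
    unfold Par.GoE at h
    push Not at h
    obtain ⟨x, p, h⟩ := h
    refine ⟨fun i => x (i + p + n), fun i hi => ?_⟩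
    have := h (i + n).toNat (by show _ < 2 * n + 1; omega)
    simp only [Par.F] at this
    rw [show (((i+n).toNat : ℤ) - n) = i by omega] at this
    rw [← this]
    congr 1; funext j; congr 1
    have : (((i+n).toNat : ℤ)) = i + n := by omega
    simp only [this]; ring_nf
  choose x hx using this
  obtain ⟨z, hz⟩ := compact x
  refine ⟨z, funext fun i => ?_⟩
  have hall : ∀ᶠ n : ℕ in (hyperfilter ℕ : Filter ℕ), ∀ j : Fin (2*rad+1), x n (i - rad + (j:ℕ)) = z (i - rad + (j:ℕ)) :=
    Filter.eventually_all.2 fun j => hz _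
  obtain ⟨n, h1, h2⟩ := (hall.and (hyper_ge i.natAbs)).exists
  show (f fun j => z (i - (rad : ℤ) + ((j : ℕ) : ℤ))) = y i
  rw [← hx n i h2]
  congr 1; funext j; exact (h1 j).symm

open Filter in
theorem Par.limit_orbit (P : Par) (y : ℤ → Bool) (hy : ∀ n, y ∈ Set.range P.F^[n]) :
    ∃ x : ℤ → ℤ → Bool, x 0 = y ∧ ∀ r, x (r+1) = P.F (x r) := by
  choose w hw using hy
  obtain ⟨z, hz⟩ := compact (fun (n : ℕ) (p : ℤ × ℤ) => P.F^[(n + p.1).toNat] (w n) p.2)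
  refine ⟨fun r c => z (r, c), ?_, fun r => ?_⟩
  · funext c
    obtain ⟨n, h⟩ := (hz (0,c)).exists
    show z (0, c) = y c
    rw [← h]; simp [hw n]
  · funext i
    have hall : ∀ᶠ n : ℕ in (hyperfilter ℕ : Filter ℕ), ∀ j : Fin (2*P.rad+1), P.F^[((n:ℤ) + r).toNat] (w n) (i - P.rad + (j:ℕ)) = z (r, i - P.rad + (j:ℕ)) :=
      Filter.eventually_all.2 fun j => hz (r, _)
    obtain ⟨n, h1, h2, h3⟩ := (hall.and ((hz (r+1,i)).and (hyper_ge (r.natAbs)))).exists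
    show z (r+1, i) = P.F (fun c => z (r, c)) i
    rw [← h2]
    simp only
    rw [show ((n:ℤ) + (r+1)).toNat = (n+r).toNat + 1 by omega, Function.iterate_succ_apply']
    unfold Par.F
    congr 1; funext j
    exact h1 j

theorem Par.orbit_limit (P : Par) (x : ℤ → ℤ → Bool) (h : ∀ r, x (r+1) = P.F (x r)) (n : ℕ) : x 0 ∈ Set.range P.F^[n] := by
  refine ⟨x (-n), ?_⟩
  have : ∀ k : ℕ, P.F^[k] (x (-n)) = x (-n + k) := by
    intro k
    induction k with
    | zero => simp
    | succ k ih => rw [Function.iterate_succ_apply', ih, ← h]; push_cast; rw [add_assoc]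
  rw [this]; simp

theorem Par.Ok_of_orbit (P : Par) (x : ℤ → ℤ → Bool) (h : ∀ r, x (r+1) = P.F (x r)) (r c : ℤ) : P.Ok (win x r c) := by
  left; rw [P.good_win, ← h]; rw [show r+1+1 = r+2 by ring]

def ext {m : ℕ} (p : Fin m → Fin m → Bool) (i j : ℕ) : Bool := if h : i < m ∧ j < m then p ⟨i, h.1⟩ ⟨j, h.2⟩ else false

open Classical in
noncomputable def Par.code (P : Par) : Σ m : ℕ, Finset (Fin m → Fin m → Bool) :=
  ⟨6 * P.N, Finset.univ.filter fun p => ¬ P.Ok (ext p)⟩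

theorem Par.code_mem (P : Par) (x : ℤ → ℤ → Bool) :
   (∀ a b : ℤ, (fun (i j : Fin P.code.1) => x (a + ((i : ℕ) : ℤ)) (b + ((j : ℕ) : ℤ))) ∉ P.code.2) ↔ ∀ r c, P.Ok (win x r c) := by
  have hN0 : 0 < P.N := by unfold Par.N; omega
  refine forall₂_congr fun a b => ?_
  have e : (fun (i j : Fin P.code.1) => x (a + ((i : ℕ) : ℤ)) (b + ((j : ℕ) : ℤ))) ∉ P.code.2 ↔
      P.Ok (ext (fun (i j : Fin (6 * P.N)) => x (a + ((i : ℕ) : ℤ)) (b + ((j : ℕ) : ℤ)))) := by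
    classical
    unfold Par.code
    rw [Finset.mem_filter]
    simp only [Finset.mem_univ, true_and, not_not]
  rw [e]
  apply P.Ok_congr
  intro i j hi hj
  unfold ext win
  rw [dif_pos ⟨by omega, hj⟩]
end Rice

namespace Rice
theorem Par.F_eq (P : Par) : P.F = caMap P.rad P.f := rfl

theorem Par.proj_noTiling (P : Par) (hG : P.GoE) (hT : ¬ ∃ c, Tiling P.B P.HR P.VR c) :
    proj '' sftOfCode P.code = limitSet (caMap P.rad P.f) := by
  rw [← P.F_eq]
  ext y
  constructor
  · rintro ⟨x, hx, rfl⟩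
    have := (P.code_mem (fun r c => x (r, c))).1 hx
    have := P.orbit_limit _ (P.orbit_of_noTiling hG hT _ this)
    exact Set.mem_iInter.2 this
  · intro hy
    obtain ⟨x, h0, h⟩ := P.limit_orbit y (Set.mem_iInter.1 hy)
    exact ⟨fun p => x p.1 p.2, (P.code_mem x).2 (P.Ok_of_orbit x h), h0⟩

theorem Par.proj_tiling (P : Par) (hT : ∃ c, Tiling P.B P.HR P.VR c) :
    proj '' sftOfCode P.code = Set.univ := by
  obtain ⟨c, hc⟩ := hT
  refine Set.eq_univ_of_forall fun y => ?_
  obtain ⟨x, hx, h0⟩ := P.full_of_tiling c hc y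
  exact ⟨fun p => x p.1 p.2, (P.code_mem x).2 hx, h0⟩
end Rice

namespace Rice
open Encodable

theorem encode_list_nat {α} [Encodable α] (l : List α) : encode l = encode (l.map encode : List ℕ) := by
  induction l with
  | nil => rfl
  | cons a l ih => rw [List.map_cons, encode_list_cons, encode_list_cons, ih]; rfl

theorem encode_multiset_nat {α} [Encodable α] (s : Multiset α) :
    ∃ l : List α, (l : Multiset α) = s ∧ l.Pairwise (fun a b => encode a ≤ encode b) ∧ encode s = encode l := by
  have aux : ∀ (r : α → α → Prop) [DecidableRel r] [IsTrans α r] [Std.Antisymm r] [Std.Total r],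
      (∀ a b, r a b → encode a ≤ encode b) → ∃ l : List α, (l : Multiset α) = s ∧
        l.Pairwise (fun a b => encode a ≤ encode b) ∧ encode (s.sort r) = encode l := by
    intro r _ _ _ _ h
    exact ⟨_, Multiset.sort_eq s r, (Multiset.pairwise_sort s r).imp fun {a b} => h a b, rfl⟩
  letI lo : IsLinearOrder α (encode ⁻¹'o ((· ≤ ·) : ℕ → ℕ → Prop)) :=
    (RelEmbedding.preimage ⟨encode, encode_injective⟩ (· ≤ ·)).isLinearOrder
  letI dr : DecidableRel (encode ⁻¹'o ((· ≤ ·) : ℕ → ℕ → Prop) : α → α → Prop) :=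
    fun a b => inferInstanceAs (Decidable (encode a ≤ encode b))
  exact aux (encode ⁻¹'o ((· ≤ ·) : ℕ → ℕ → Prop)) (fun a b h => h)

theorem encode_finset_nat {α} [Encodable α] (s : Finset α) (K : List ℕ) (hK : K.Pairwise (· < ·))
    (h : ∀ k, k ∈ K ↔ ∃ a ∈ s, encode a = k) : encode s = encode K := by
  have e : encode s = encode s.val := rfl
  obtain ⟨l, hl, hs, he⟩ := encode_multiset_nat s.val
  rw [e, he, encode_list_nat]
  congr 1
  have hnd : l.Nodup := by
    have := s.nodup; rw [← hl] at this; exact Multiset.coe_nodup.1 this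
  have h1 : (l.map encode : List ℕ).Pairwise (· ≤ ·) := List.pairwise_map.2 hs
  have h2 : (l.map encode : List ℕ).Nodup := hnd.map encode_injective
  have hm : ∀ a, a ∈ l ↔ a ∈ s := by
    intro a; rw [← Finset.mem_val, ← hl]; rfl
  have h3 : (l.map encode : List ℕ).Perm K := by
    refine (List.perm_ext_iff_of_nodup h2 ?_).2 fun k => ?_
    · exact hK.imp fun h => h.ne
    · rw [h, List.mem_map]; simp only [hm]
  exact h3.eq_of_pairwise (fun a b _ _ hab hba => le_antisymm hab hba) h1 (hK.imp fun h => h.le)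

theorem encode_finPi {α} [Encodable α] (m : ℕ) (p : Fin m → α) (q : ℕ → ℕ) (hq : ∀ i : Fin m, encode (p i) = q i) :
    @encode _ (Encodable.finPi m fun _ => α) p = encode ((List.range m).map fun i => Nat.pair i (q i)) := by
  have e1 : @encode _ (Encodable.finPi m fun _ => α) p =
      encode (List.ofFn fun i : Fin m => (⟨i, p i⟩ : Σ _ : Fin m, α)) := by
    have : List.ofFn (fun i : Fin m => (⟨i, p i⟩ : Σ _ : Fin m, α)) =
      (List.Vector.ofFn (fun i : Fin m => (⟨i, p i⟩ : Σ _ : Fin m, α))).1 := (List.Vector.toList_ofFn _).symm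
    rw [this]; rfl
  rw [e1, encode_list_nat]
  congr 1
  apply List.ext_getElem
  · simp
  · intro i h1 h2
    simp only [List.getElem_map, List.getElem_ofFn, List.getElem_range, encode_sigma_val]
    rw [hq]; rfl

/-- Explicit encoding of the `m × m` pattern with entries `W`. -/
def EE (m : ℕ) (W : ℕ → ℕ → Bool) : ℕ :=
  encode ((List.range m).map fun i => Nat.pair i (encode ((List.range m).map fun j => Nat.pair j (encode (W i j)))))

theorem encode_pattern (m : ℕ) (p : Fin m → Fin m → Bool) : encode p = EE m (ext p) := by
  refine encode_finPi m p _ fun i => ?_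
  refine encode_finPi m (p i) (fun j => encode (ext p i j)) fun j => ?_
  simp [ext]

theorem pair_mono {a b c d : ℕ} (h : a ≤ b) (h' : c ≤ d) : Nat.pair a c ≤ Nat.pair b d :=
  le_trans ((show StrictMono fun x => Nat.pair x c from fun _ _ h => Nat.pair_lt_pair_left c h).monotone h)
    ((show StrictMono fun x => Nat.pair b x from fun _ _ h => Nat.pair_lt_pair_right b h).monotone h')

theorem encode_map_mono (l : List ℕ) (g g' : ℕ → ℕ) (h : ∀ i, g i ≤ g' i) : encode (l.map g) ≤ encode (l.map g') := by
  induction l with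
  | nil => exact le_rfl
  | cons a l ih =>
    rw [List.map_cons, List.map_cons, encode_list_cons, encode_list_cons]
    exact Nat.succ_le_succ (pair_mono (h a) ih)

theorem EE_le (m W) : EE m W ≤ EE m (fun _ _ => true) := by
  refine encode_map_mono _ _ _ fun i => pair_mono le_rfl ?_
  refine encode_map_mono _ _ _ fun j => pair_mono le_rfl ?_
  cases W i j <;> simp

/-- Extraction of entries from a code. -/
def Wd (k i j : ℕ) : Bool :=
  decide (((Denumerable.ofNat (List ℕ) (((Denumerable.ofNat (List ℕ) k).getD i 0).unpair.2)).getD j 0).unpair.2 = 1)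

theorem Wd_EE (m W i j) (hi : i < m) (hj : j < m) : Wd (EE m W) i j = W i j := by
  have key : ∀ (g : ℕ → ℕ) (i : ℕ), i < m →
      ((Denumerable.ofNat (List ℕ) (encode ((List.range m).map fun i => Nat.pair i (g i)))).getD i 0).unpair.2 = g i := by
    intro g i hi
    rw [Denumerable.ofNat_encode, List.getD_eq_getElem _ _ (by simpa using hi), List.getElem_map, List.getElem_range,
      Nat.unpair_pair]
  unfold Wd EE
  rw [key _ i hi, key _ j hj]
  cases W i j <;> simp

open Classical in
theorem Par.encode_code (P : Par) : encode P.code = Nat.pair (6 * P.N)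
    (encode ((List.range (EE (6 * P.N) (fun _ _ => true) + 1)).filter
      fun k => EE (6 * P.N) (Wd k) = k ∧ ¬ P.Ok (Wd k))) := by
  have hN0 : 0 < P.N := by unfold Par.N; omega
  unfold Par.code
  rw [encode_sigma_val]
  congr 1
  refine encode_finset_nat _ _ (List.pairwise_lt_range.filter _) fun k => ?_
  simp only [List.mem_filter, List.mem_range, Finset.mem_filter, Finset.mem_univ, true_and, decide_eq_true_eq]
  have hE : ∀ W W', (∀ i j, i < 6 * P.N → j < 6 * P.N → W i j = W' i j) → EE (6*P.N) W = EE (6*P.N) W' := by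
    intro W W' h
    unfold EE
    congr 1
    refine List.map_congr_left fun i hi => ?_
    congr 2
    refine List.map_congr_left fun j hj => ?_
    rw [h i j (List.mem_range.1 hi) (List.mem_range.1 hj)]
  constructor
  · rintro ⟨-, h1, h2⟩
    refine ⟨fun i j => Wd k i j, ?_, ?_⟩
    · rwa [P.Ok_congr (W' := Wd k)]
      intro i j hi hj
      unfold ext; rw [dif_pos ⟨by omega, hj⟩]
    · rw [encode_pattern]
      conv_rhs => rw [← h1]
      refine hE _ _ fun i j hi hj => ?_
      unfold ext; rw [dif_pos ⟨hi, hj⟩]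
  · rintro ⟨p, h1, rfl⟩
    rw [encode_pattern]
    have hw : ∀ i j, i < 6 * P.N → j < 6 * P.N → Wd (EE (6 * P.N) (ext p)) i j = ext p i j := fun i j hi hj => Wd_EE _ _ _ _ hi hj
    refine ⟨Nat.lt_succ_of_le (EE_le _ _), hE _ _ hw, ?_⟩
    rwa [P.Ok_congr (W' := ext p)]
    intro i j hi hj
    exact hw i j (by omega) hj
end Rice

namespace Rice
open Encodable

theorem pp_exists_lt {β : Type} [Primcodable β] {R : β → ℕ → Prop} {g : β → ℕ} (hg : Primrec g)
    (hR : PrimrecPred fun q : β × ℕ => R q.1 q.2) : PrimrecPred fun b => ∃ a < g b, R b a := by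
  have : PrimrecRel fun (a : ℕ) (b : β) => R b a := hR.comp (Primrec.pair Primrec.snd Primrec.fst)
  exact ((PrimrecRel.exists_mem_list this).comp (Primrec.list_range.comp hg) Primrec.id).of_eq (by simp)
theorem pp_forall_lt {β : Type} [Primcodable β] {R : β → ℕ → Prop} {g : β → ℕ} (hg : Primrec g)
    (hR : PrimrecPred fun q : β × ℕ => R q.1 q.2) : PrimrecPred fun b => ∀ a < g b, R b a := by
  have : PrimrecRel fun (a : ℕ) (b : β) => R b a := hR.comp (Primrec.pair Primrec.snd Primrec.fst)
  exact ((PrimrecRel.forall_mem_list this).comp (Primrec.list_range.comp hg) Primrec.id).of_eq (by simp)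

theorem primrec_Wd {β : Type} [Primcodable β] {k i j : β → ℕ} (hk : Primrec k) (hi : Primrec i) (hj : Primrec j) :
    Primrec fun b => Wd (k b) (i b) (j b) := by
  have h : ∀ {k i : β → ℕ}, Primrec k → Primrec i →
      Primrec fun b => ((Denumerable.ofNat (List ℕ) (k b)).getD (i b) 0).unpair.2 := by
    intro k i hk hi
    exact Primrec.snd.comp (Primrec.unpair.comp
      ((Primrec.list_getD 0).comp ((Primrec.ofNat (List ℕ)).comp hk) hi))
  have := h (h hk hi) hj
  have h2 : PrimrecPred fun b => ((Denumerable.ofNat (List ℕ) (((Denumerable.ofNat (List ℕ) (k b)).getD (i b) 0).unpair.2)).getD (j b) 0).unpair.2 = 1 :=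
    Primrec.eq.comp this (Primrec.const 1)
  exact primrecPred_iff_primrec_decide.1 h2

theorem primrec_EE {β : Type} [Primcodable β] {m : β → ℕ} {W : β → ℕ → ℕ → Bool} (hm : Primrec m)
    (hW : Primrec fun q : (β × ℕ) × ℕ => W q.1.1 q.1.2 q.2) : Primrec fun b => EE (m b) (W b) := by
  unfold EE
  refine Primrec.encode.comp (Primrec.list_map (Primrec.list_range.comp hm) ?_)
  refine Primrec₂.natPair.comp Primrec.snd ?_
  refine Primrec.encode.comp (Primrec.list_map (Primrec.list_range.comp (hm.comp Primrec.fst)) ?_)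
  exact Primrec₂.natPair.comp Primrec.snd (Primrec.encode.comp hW)

section
variable (rad : ℕ) (f : (Fin (2 * rad + 1) → Bool) → Bool) (U : ℕ) (u : ℕ → Bool) (B : ℕ → ℕ) (HR VR : ℕ → ℕ → ℕ → Prop)

def PP (n : ℕ) : Par := ⟨rad, f, U, u, B n, HR n, VR n⟩

theorem primrec_M (hB : Primrec B) : Primrec fun n => (PP rad f U u B HR VR n).M := by
  unfold Par.M PP
  exact Primrec.succ.comp (Primrec.nat_add.comp (Primrec.nat_add.comp (Primrec.const U) hB) (Primrec.const rad))
theorem primrec_N (hB : Primrec B) : Primrec fun n => (PP rad f U u B HR VR n).N := by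
  have := primrec_M rad f U u B HR VR hB
  unfold Par.N
  exact Primrec.nat_add.comp (Primrec.nat_add.comp (Primrec.nat_add.comp this (Primrec.const U)) (Primrec.const 2)) hB

theorem primrec_cw (hB : Primrec B) (hu : Primrec u) {β : Type} [Primcodable β] {n a k : β → ℕ} (hn : Primrec n) (ha : Primrec a) (hk : Primrec k) :
    Primrec fun b => (PP rad f U u B HR VR (n b)).cw (a b) (k b) := by
  have hM := (primrec_M rad f U u B HR VR hB).comp hn
  unfold Par.cw
  refine Primrec.ite (Primrec.nat_lt.comp hk hM) (Primrec.const _) ?_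
  refine Primrec.ite (Primrec.eq.comp hk hM) (Primrec.const _) ?_
  refine Primrec.ite (Primrec.nat_lt.comp hk (Primrec.nat_add.comp (Primrec.nat_add.comp hM (Primrec.const 1)) (Primrec.const U)))
    (hu.comp (Primrec.nat_sub.comp (Primrec.nat_sub.comp hk hM) (Primrec.const 1))) ?_
  refine Primrec.ite (Primrec.eq.comp hk (Primrec.nat_add.comp (Primrec.nat_add.comp hM (Primrec.const 1)) (Primrec.const U)))
    (Primrec.const _) ?_
  have : PrimrecPred fun b => k b - ((PP rad f U u B HR VR (n b)).M + U + 2) < a b :=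
    Primrec.nat_lt.comp (Primrec.nat_sub.comp hk (Primrec.nat_add.comp (Primrec.nat_add.comp hM (Primrec.const U)) (Primrec.const 2))) ha
  exact primrecPred_iff_primrec_decide.1 this

theorem primrec_isC (hB : Primrec B) (hu : Primrec u) {β : Type} [Primcodable β] {n w i p a : β → ℕ} (hn : Primrec n) (hw : Primrec w)
    (hi : Primrec i) (hp : Primrec p) (ha : Primrec a) :
    PrimrecPred fun b => (PP rad f U u B HR VR (n b)).isC (Wd (w b)) (i b) (p b) (a b) := by
  have hN := (primrec_N rad f U u B HR VR hB).comp hn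
  unfold Par.isC
  refine pp_forall_lt hN ?_
  refine Primrec.eq.comp ?_ ?_
  · exact primrec_Wd (hw.comp .fst) (hi.comp .fst) (Primrec.nat_add.comp (hp.comp .fst) .snd)
  · exact primrec_cw rad f U u B HR VR hB hu (hn.comp .fst) (ha.comp .fst) .snd

theorem primrec_pH (hB : Primrec B) (hu : Primrec u) (hHR : PrimrecPred (fun p : ℕ×ℕ×ℕ => HR p.1 p.2.1 p.2.2))
    {β : Type} [Primcodable β] {n w i p : β → ℕ} (hn : Primrec n) (hw : Primrec w)
    (hi : Primrec i) (hp : Primrec p) :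
    PrimrecPred fun b => (PP rad f U u B HR VR (n b)).pH (Wd (w b)) (i b) (p b) := by
  have hN := (primrec_N rad f U u B HR VR hB).comp hn
  have hBn : Primrec fun b => (PP rad f U u B HR VR (n b)).B := hB.comp hn
  unfold Par.pH
  refine pp_exists_lt hBn (pp_exists_lt (hBn.comp .fst) ?_)
  have f2 : Primrec fun q : (β × ℕ) × ℕ => q.1.1 := Primrec.fst.comp .fst
  have fa : Primrec fun q : (β × ℕ) × ℕ => q.1.2 := Primrec.snd.comp .fst
  have fb : Primrec fun q : (β × ℕ) × ℕ => q.2 := Primrec.snd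
  refine (primrec_isC rad f U u B HR VR hB hu (hn.comp f2) (hw.comp f2) (hi.comp f2) (hp.comp f2) fa).and ?_
  refine (primrec_isC rad f U u B HR VR hB hu (hn.comp f2) (hw.comp f2) (hi.comp f2)
    (Primrec.nat_add.comp (hp.comp f2) (hN.comp f2)) fb).and ?_
  exact hHR.comp ((hn.comp f2).pair (fa.pair fb))

theorem primrec_pV (hB : Primrec B) (hu : Primrec u) (hVR : PrimrecPred (fun p : ℕ×ℕ×ℕ => VR p.1 p.2.1 p.2.2))
    {β : Type} [Primcodable β] {n w p : β → ℕ} (hn : Primrec n) (hw : Primrec w) (hp : Primrec p) :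
    PrimrecPred fun b => (PP rad f U u B HR VR (n b)).pV (Wd (w b)) (p b) := by
  have hBn : Primrec fun b => (PP rad f U u B HR VR (n b)).B := hB.comp hn
  unfold Par.pV
  refine pp_exists_lt hBn (pp_exists_lt (hBn.comp .fst) ?_)
  have f2 : Primrec fun q : (β × ℕ) × ℕ => q.1.1 := Primrec.fst.comp .fst
  have fa : Primrec fun q : (β × ℕ) × ℕ => q.1.2 := Primrec.snd.comp .fst
  have fb : Primrec fun q : (β × ℕ) × ℕ => q.2 := Primrec.snd
  refine (primrec_isC rad f U u B HR VR hB hu (hn.comp f2) (hw.comp f2) (.const 0) (hp.comp f2) fa).and ?_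
  refine (primrec_isC rad f U u B HR VR hB hu (hn.comp f2) (hw.comp f2) (.const 1) (hp.comp f2) fb).and ?_
  exact hVR.comp ((hn.comp f2).pair (fa.pair fb))

theorem primrec_good (hB : Primrec B) {β : Type} [Primcodable β] {n w : β → ℕ} (hn : Primrec n) (hw : Primrec w) :
    PrimrecPred fun b => (PP rad f U u B HR VR (n b)).good (Wd (w b)) := by
  have hN := (primrec_N rad f U u B HR VR hB).comp hn
  have hc : Primrec fun b => 3 * (PP rad f U u B HR VR (n b)).N - 1 :=
    Primrec.nat_sub.comp (Primrec.nat_mul.comp (.const 3) hN) (.const 1)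
  have key : PrimrecPred fun b => ∃ v : Fin (2 * rad + 1) → Bool,
      (¬ ∃ j : Fin (2 * rad + 1), ¬ Wd (w b) 1 (3 * (PP rad f U u B HR VR (n b)).N - 1 - rad + j) = v j) ∧
      f v = Wd (w b) 2 (3 * (PP rad f U u B HR VR (n b)).N - 1) := by
    have h1 : ∀ (v : Fin (2 * rad + 1) → Bool) (j : Fin (2 * rad + 1)), PrimrecPred fun b =>
        Wd (w b) 1 (3 * (PP rad f U u B HR VR (n b)).N - 1 - rad + j) = v j := fun v j =>
      Primrec.eq.comp (primrec_Wd hw (.const 1) (Primrec.nat_add.comp (Primrec.nat_sub.comp hc (.const rad)) (.const (j : ℕ)))) (.const (v j))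
    have h2 : ∀ (v : Fin (2 * rad + 1) → Bool), PrimrecPred fun b =>
        f v = Wd (w b) 2 (3 * (PP rad f U u B HR VR (n b)).N - 1) := fun v =>
      Primrec.eq.comp (.const (f v)) (primrec_Wd hw (.const 2) hc)
    exact primrecPred_finite_exists fun v => (primrecPred_finite_exists fun j => (h1 v j).not).not.and (h2 v)
  refine key.of_eq fun b => ?_
  unfold Par.good
  push Not
  constructor
  · rintro ⟨v, h1, h2⟩
    rw [← h2]
    have : v = fun j : Fin (2 * rad + 1) => Wd (w b) 1 (3 * (PP rad f U u B HR VR (n b)).N - 1 - rad + j) := funext fun j => (h1 j).symm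
    rw [this]; rfl
  · intro h
    exact ⟨_, fun j => rfl, h⟩

theorem primrec_Ok (hB : Primrec B) (hu : Primrec u) (hHR : PrimrecPred (fun p : ℕ×ℕ×ℕ => HR p.1 p.2.1 p.2.2))
    (hVR : PrimrecPred (fun p : ℕ×ℕ×ℕ => VR p.1 p.2.1 p.2.2)) {β : Type} [Primcodable β] {n w : β → ℕ} (hn : Primrec n) (hw : Primrec w) :
    PrimrecPred fun b => (PP rad f U u B HR VR (n b)).Ok (Wd (w b)) := by
  have hN := (primrec_N rad f U u B HR VR hB).comp hn
  unfold Par.Ok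
  refine (primrec_good rad f U u B HR VR hB hn hw).or ?_
  unfold Par.coded
  have f2 : Primrec fun q : (β × ℕ) × ℕ => q.1.1 := Primrec.fst.comp .fst
  have fa : Primrec fun q : (β × ℕ) × ℕ => q.1.2 := Primrec.snd.comp .fst
  have fb : Primrec fun q : (β × ℕ) × ℕ => q.2 := Primrec.snd
  have hpos : Primrec fun q : (β × ℕ) × ℕ => q.1.2 + q.2 * (PP rad f U u B HR VR (n q.1.1)).N :=
    Primrec.nat_add.comp fa (Primrec.nat_mul.comp fb (hN.comp f2))
  refine pp_exists_lt hN (PrimrecPred.and (pp_forall_lt (.const 4) (PrimrecPred.and ?_ ?_)) (pp_forall_lt (.const 5) ?_))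
  · exact primrec_pH rad f U u B HR VR hB hu hHR (hn.comp f2) (hw.comp f2) (.const 0) hpos
  · exact primrec_pH rad f U u B HR VR hB hu hHR (hn.comp f2) (hw.comp f2) (.const 1) hpos
  · exact primrec_pV rad f U u B HR VR hB hu hVR (hn.comp f2) (hw.comp f2) hpos

theorem primrec_code (hB : Primrec B) (hu : Primrec u) (hHR : PrimrecPred (fun p : ℕ×ℕ×ℕ => HR p.1 p.2.1 p.2.2))
    (hVR : PrimrecPred (fun p : ℕ×ℕ×ℕ => VR p.1 p.2.1 p.2.2)) :
    Primrec fun n => encode (PP rad f U u B HR VR n).code := by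
  classical
  have hN := (primrec_N rad f U u B HR VR hB)
  have h6 : Primrec fun n => 6 * (PP rad f U u B HR VR n).N := Primrec.nat_mul.comp (.const 6) hN
  simp only [Par.encode_code]
  refine Primrec₂.natPair.comp h6 (Primrec.encode.comp ?_)
  have hpred : PrimrecRel fun (k : ℕ) (n : ℕ) => EE (6 * (PP rad f U u B HR VR n).N) (Wd k) = k ∧ ¬ (PP rad f U u B HR VR n).Ok (Wd k) := by
    refine PrimrecPred.and ?_ (PrimrecPred.not ?_)
    · refine Primrec.eq.comp (primrec_EE (h6.comp .snd) ?_) .fst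
      exact primrec_Wd (Primrec.fst.comp (Primrec.fst.comp .fst)) (Primrec.snd.comp .fst) .snd
    · exact primrec_Ok rad f U u B HR VR hB hu hHR hVR .snd .fst
  have hl : Primrec fun n => List.range (EE (6 * (PP rad f U u B HR VR n).N) (fun _ _ => true) + 1) :=
    Primrec.list_range.comp (Primrec.succ.comp (primrec_EE h6 (.const true)))
  convert (PrimrecRel.listFilter hpred).comp hl Primrec.id using 2
  simp only [id_eq]
end

end Rice

namespace Rice
open Encodable

theorem exists_code (F : Config Bool → Config Bool) (hF : IsCA F) (hs : ¬ Function.Surjective F)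
    (B : ℕ → ℕ) (HR VR : ℕ → ℕ → ℕ → Prop) (hB : Primrec B)
    (hHR : PrimrecPred (fun p : ℕ×ℕ×ℕ => HR p.1 p.2.1 p.2.2))
    (hVR : PrimrecPred (fun p : ℕ×ℕ×ℕ => VR p.1 p.2.1 p.2.2)) :
    ∃ c : ℕ → SFTCode, Primrec (fun n => encode (c n)) ∧ ∀ n,
      ((¬ ∃ t, Tiling (B n) (HR n) (VR n) t) → proj '' sftOfCode (c n) = limitSet F) ∧
      ((∃ t, Tiling (B n) (HR n) (VR n) t) → proj '' sftOfCode (c n) = Set.univ) := by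
  obtain ⟨rad, f, rfl⟩ := hF
  obtain ⟨U, u, hG⟩ := exists_GoE rad f hs
  let u' : ℕ → Bool := fun k => ((List.range U).map u).getD k false
  have hu' : Primrec u' := (Primrec.list_getD false).comp (.const _) .id
  have hG' : ∀ B HR VR, (Par.mk rad f U u' B HR VR).GoE := by
    intro B HR VR x p h
    refine hG B HR VR x p fun k hk => ?_
    refine (h k hk).trans ?_
    show u' k = u k
    simp only [u']
    rw [List.getD_eq_getElem _ _ (by simpa using hk), List.getElem_map, List.getElem_range]
  refine ⟨fun n => (PP rad f U u' B HR VR n).code, primrec_code rad f U u' B HR VR hB hu' hHR hVR, fun n => ⟨fun h => ?_, fun h => ?_⟩⟩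
  · exact (PP rad f U u' B HR VR n).proj_noTiling (hG' _ _ _) h
  · exact (PP rad f U u' B HR VR n).proj_tiling h
end Rice

/-- Rice theorem for projections of two-dimensional subshifts of finite type:
if `P` holds for the limit set of some non-surjective CA on `𝟚` and fails for the
limit set of another one, then the predicate `π(Σ) ∈ P` on codes of two-dimensional
subshifts of finite type is not computable. -/
theorem rice_sft_projection_undecidable (P : Set (Set (Config Bool)))
    (h0 : ∃ F : Config Bool → Config Bool, IsCA F ∧ ¬ Function.Surjective F ∧ limitSet F ∈ P)
    (h1 : ∃ F : Config Bool → Config Bool, IsCA F ∧ ¬ Function.Surjective F ∧ limitSet F ∉ P) :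
    ¬ ∃ g : ℕ → Bool, Computable g ∧
        ∀ c : SFTCode, (g (Encodable.encode c) = true ↔ proj '' sftOfCode c ∈ P) := by
  rintro ⟨g, hg, hP⟩
  obtain ⟨F0, ca0, s0, m0⟩ := h0
  obtain ⟨F1, ca1, s1, m1⟩ := h1
  obtain ⟨B, HR, VR, hB, hHR, hVR, hund⟩ := Rice.exists_tiles
  obtain ⟨c0, p0, q0⟩ := Rice.exists_code F0 ca0 s0 B HR VR hB hHR hVR
  obtain ⟨c1, p1, q1⟩ := Rice.exists_code F1 ca1 s1 B HR VR hB hHR hVR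
  apply hund
  have hc : Computable fun n => !(g (Encodable.encode (c0 n)) == g (Encodable.encode (c1 n))) :=
    Primrec.not.to_comp.comp (Primrec.beq.to_comp.comp (hg.comp p0.to_comp) (hg.comp p1.to_comp))
  refine ComputablePred.computable_iff.2 ⟨_, hc, ?_⟩
  funext n
  refine propext ?_
  have e0 := hP (c0 n)
  have e1 := hP (c1 n)
  constructor
  · intro h
    rw [(q0 n).1 h] at e0
    rw [(q1 n).1 h] at e1
    have a0 := e0.2 m0
    have a1 : g (Encodable.encode (c1 n)) = false := by
      rw [← Bool.not_eq_true]; exact fun h => m1 (e1.1 h)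
    rw [a0, a1]; rfl
  · intro h hT
    rw [(q0 n).2 hT] at e0
    rw [(q1 n).2 hT] at e1
    have : g (Encodable.encode (c0 n)) = g (Encodable.encode (c1 n)) := by
      rw [Bool.eq_iff_iff, e0, e1]
    rw [this] at h
    simp at h
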